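/- arXiv:1706.03631 — 4 statements merged into one kernel-verified Lean document; each statement's English description precedes it below -/
import Mathlib

section
/- Let n ≥ 2 and let m = 2m₀+1 be odd with m₀ ≥ 1. There exists a nonzero polynomial P in (n−1)m+1 complex variables such that for every Hankel tensor H of order m and dimension n whose parameter vector h satisfies P(h) ≠ 0, one has rank_V(H) = m₀(n−1) + ⌈n/2⌉ and m₀(n−1) + 1 ≤ brank(H) ≤ rank(H) ≤ rank_S(H) ≤ rank_V(H). -/
open scoped BigOperators
open MvPolynomial

noncomputable section

/-- An order-`m`, dimension-`n` complex tensor. -/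
abbrev Tensor (m n : ℕ) := (Fin m → Fin n) → ℂ

/-- Tensors expressible as a sum of `r` rank-one tensors. -/
def cpSet (m n r : ℕ) : Set (Tensor m n) :=
  {T | ∃ u : Fin r → Fin m → Fin n → ℂ, ∀ i, T i = ∑ k, ∏ j, u k j (i j)}

/-- Tensors expressible as a sum of `r` symmetric rank-one tensors. -/
def symSet (m n r : ℕ) : Set (Tensor m n) :=
  {T | ∃ v : Fin r → Fin n → ℂ, ∀ i, T i = ∑ k, ∏ j, v k (i j)}

/-- The Vandermonde vector `v(a,b) ∈ ℂ^n`, `v(a,b)_i = a^(n-1-i) * b^i`. -/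
def vand (n : ℕ) (a b : ℂ) : Fin n → ℂ := fun i => a ^ (n - 1 - (i : ℕ)) * b ^ (i : ℕ)

/-- Tensors expressible as a sum of `r` Vandermonde rank-one tensors. -/
def vandSet (m n r : ℕ) : Set (Tensor m n) :=
  {T | ∃ ab : Fin r → ℂ × ℂ, ∀ i, T i = ∑ k, ∏ j, vand n (ab k).1 (ab k).2 (i j)}

/-- The cp rank of a tensor. -/
def cpRank {m n : ℕ} (T : Tensor m n) : ℕ := sInf {r | T ∈ cpSet m n r}

/-- The symmetric rank of a tensor. -/
def symRank {m n : ℕ} (T : Tensor m n) : ℕ := sInf {r | T ∈ symSet m n r}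

/-- The Vandermonde rank of a tensor. -/
def vandRank {m n : ℕ} (T : Tensor m n) : ℕ := sInf {r | T ∈ vandSet m n r}

/-- The border rank of a tensor (closure in the product topology). -/
def brank {m n : ℕ} (T : Tensor m n) : ℕ := sInf {r | T ∈ closure (cpSet m n r)}

/-- The symmetric border rank of a tensor. -/
def bSymRank {m n : ℕ} (T : Tensor m n) : ℕ := sInf {r | T ∈ closure (symSet m n r)}

/-- The border Vandermonde rank of a tensor. -/
def bVandRank {m n : ℕ} (T : Tensor m n) : ℕ := sInf {r | T ∈ closure (vandSet m n r)}

/-- `T` is the Hankel tensor with parameter vector `h ∈ ℂ^{(n-1)m+1}`. -/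
def IsHankel {m n : ℕ} (T : Tensor m n) (h : Fin ((n - 1) * m + 1) → ℂ) : Prop :=
  ∀ i : Fin m → Fin n, T i = h ⟨∑ j, (i j : ℕ), by
    have h1 : ∑ j, (i j : ℕ) ≤ ∑ _j : Fin m, (n - 1) :=
      Finset.sum_le_sum fun j _ => Nat.le_pred_of_lt (i j).isLt
    simp only [Finset.sum_const, Finset.card_univ, Fintype.card_fin, smul_eq_mul] at h1
    exact Nat.lt_succ_of_le (h1.trans (le_of_eq (Nat.mul_comm m (n - 1))))⟩

/-- The `(d-r+1) × (r+1)` Hankel (catalecticant) matrix `C_{d-r,r}(h)` of `h ∈ ℂ^{d+1}`. -/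
def hMat (d r : ℕ) (h : Fin (d + 1) → ℂ) : Matrix (Fin (d - r + 1)) (Fin (r + 1)) ℂ :=
  Matrix.of fun i j => if hij : (i : ℕ) + (j : ℕ) < d + 1 then h ⟨(i : ℕ) + (j : ℕ), hij⟩ else 0

/-- The binary form `f(x,y) = f_0 x^r + f_1 x^(r-1) y + ⋯ + f_r y^r`. -/
def binForm (r : ℕ) (f : Fin (r + 1) → ℂ) : MvPolynomial (Fin 2) ℂ :=
  ∑ j : Fin (r + 1), C (f j) * X 0 ^ (r - (j : ℕ)) * X 1 ^ (j : ℕ)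

/-- The binary form `h(x,y) = ∑_j binom(d,j) h_j x^j y^(d-j)` associated with `h ∈ ℂ^{d+1}`. -/
def assocForm (d : ℕ) (h : Fin (d + 1) → ℂ) : MvPolynomial (Fin 2) ℂ :=
  ∑ j : Fin (d + 1), C ((d.choose (j : ℕ) : ℂ) * h j) * X 0 ^ (j : ℕ) * X 1 ^ (d - (j : ℕ))

/-- Parameter vectors of binary forms of Waring rank at most `r`. -/
def waringSet (d r : ℕ) : Set (Fin (d + 1) → ℂ) :=
  {h | ∃ ab : Fin r → ℂ × ℂ,
    assocForm d h = ∑ i, (C (ab i).1 * X 0 + C (ab i).2 * X 1) ^ d}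

/-- The Waring rank of the binary form associated with `h`. -/
def waringRank (d : ℕ) (h : Fin (d + 1) → ℂ) : ℕ := sInf {r | h ∈ waringSet d r}

/-- The border Waring rank of the binary form associated with `h`. -/
def bWaringRank (d : ℕ) (h : Fin (d + 1) → ℂ) : ℕ := sInf {r | h ∈ closure (waringSet d r)}

/-!
Put `d = (n - 1) m`. A decomposition of a Hankel tensor into `r` Vandermonde powers is the same as
a way of writing its parameter vector `h` as a sum of `r` geometric sequences
`k ↦ a ^ (d - k) * b ^ k`. As in Sylvester's theorem on binary forms, such a sum is found from a
linear recurrence: for `r = ⌊d / 2⌋ + 1` and generic `h`, the order-`r` recurrence satisfied by `h`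
has coefficients given by Cramer's rule and simple characteristic roots. When `d` is even one term
of `h` is missing, and continuing `h` by zeros supplies it.

Conversely, a Hankel matrix of size `s` factors through `r` dimensions when `h` is a sum of `r`
geometric sequences, and is a submatrix of a flattening of the tensor. Its determinant therefore
bounds the Vandermonde rank for `s ≤ d / 2 + 1`, and the border rank for
`s ≤ (n - 1) * (m / 2) + 1`.

That these polynomial conditions on `h` are not vacuous is seen at the sequence whose recurrence
has characteristic polynomial `X ^ r - 1`.
-/

section Generic

variable {σ K : Type*} [CommRing K]

/-- A property of points of the affine space `σ → K` holds generically if it holds off the zero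
locus of some nonzero polynomial. -/
def HoldsGenerically (Q : (σ → K) → Prop) : Prop :=
  ∃ P : MvPolynomial σ K, P ≠ 0 ∧ ∀ h, eval h P ≠ 0 → Q h

lemma HoldsGenerically.and [IsDomain K] {Q₁ Q₂ : (σ → K) → Prop} (h₁ : HoldsGenerically Q₁)
    (h₂ : HoldsGenerically Q₂) : HoldsGenerically fun h => Q₁ h ∧ Q₂ h := by
  obtain ⟨P₁, hP₁, hQ₁⟩ := h₁
  obtain ⟨P₂, hP₂, hQ₂⟩ := h₂
  refine ⟨P₁ * P₂, mul_ne_zero hP₁ hP₂, fun h hP => ?_⟩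
  rw [map_mul] at hP
  exact ⟨hQ₁ h (left_ne_zero_of_mul hP), hQ₂ h (right_ne_zero_of_mul hP)⟩

lemma holdsGenerically_eval_ne_zero {P : MvPolynomial σ K} {w : σ → K} (hw : eval w P ≠ 0) :
    HoldsGenerically fun h => eval h P ≠ 0 :=
  ⟨P, by rintro rfl; simp at hw, fun _ => id⟩

end Generic

section ZeroExtend

variable {A B : Type*} {N : ℕ}

/-- A finite vector regarded as an infinite sequence, continued by zeros. It lets Hankel matrices
of every size be formed from a parameter vector without carrying index bounds. -/
abbrev zeroExtend [Zero A] (h : Fin N → A) : ℕ → A :=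
  Function.extend Fin.val h 0

lemma zeroExtend_apply_of_lt [Zero A] (h : Fin N → A) {k : ℕ} (hk : k < N) :
    zeroExtend h k = h ⟨k, hk⟩ :=
  Fin.val_injective.extend_apply h 0 ⟨k, hk⟩

lemma zeroExtend_restrict [Zero A] {g : ℕ → A} (hg : ∀ k, N ≤ k → g k = 0) :
    zeroExtend (fun i : Fin N => g i) = g := by
  funext k
  rcases lt_or_ge k N with hk | hk
  · exact zeroExtend_apply_of_lt _ hk
  · rw [hg k hk]
    exact Function.extend_apply' _ _ _ fun ⟨i, hi⟩ => (hi ▸ i.2).not_ge hk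

lemma comp_zeroExtend [Zero A] [Zero B] {φ : A → B} (hφ : φ 0 = 0) (h : Fin N → A) :
    φ ∘ zeroExtend h = zeroExtend (φ ∘ h) := by
  funext k
  simp [zeroExtend, Function.apply_extend φ, Function.comp_def, Pi.zero_def, hφ]

lemma eval_comp_zeroExtend_X {K : Type*} [CommRing K] (h : Fin N → K) :
    eval h ∘ zeroExtend (X : Fin N → MvPolynomial (Fin N) K) = zeroExtend h := by
  rw [comp_zeroExtend (map_zero _)]
  congr
  funext i
  exact eval_X i

end ZeroExtend

section Recurrence

lemma mkSol_eq_of_lt {R : Type*} [CommSemiring R] (E : LinearRecurrence R) {g : ℕ → R} {N : ℕ}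
    (hg : ∀ i < N, g (i + E.order) = ∑ j, E.coeffs j * g (i + j)) {k : ℕ}
    (hk : k < N + E.order) : E.mkSol (fun i => g i) k = g k := by
  induction k using Nat.strong_induction_on with
  | _ k ih =>
    rcases lt_or_ge k E.order with hkr | hkr
    · exact E.mkSol_eq_init _ ⟨k, hkr⟩
    · obtain ⟨i, rfl⟩ := Nat.exists_eq_add_of_le' hkr
      rw [E.is_sol_mkSol, hg i (by omega)]
      exact Finset.sum_congr rfl fun j _ => by rw [ih _ (by omega) (by omega)]

lemma exists_injective_isRoot {R : Type*} [CommRing R] [IsDomain R] {p : Polynomial R}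
    (hs : p.Splits) (hp : p.Separable) :
    ∃ x : Fin p.natDegree → R, x.Injective ∧ ∀ l, p.IsRoot (x l) := by
  classical
  have hcard : p.roots.toFinset.card = p.natDegree := by
    rw [Multiset.toFinset_card_of_nodup (Polynomial.nodup_roots hp), hs.natDegree_eq_card_roots]
  let e := p.roots.toFinset.equivFinOfCardEq hcard
  exact ⟨fun l => e.symm l, Subtype.val_injective.comp e.symm.injective, fun l =>
    Polynomial.isRoot_of_mem_roots (Multiset.mem_toFinset.1 (e.symm l).2)⟩

variable {K : Type*} [Field K]

lemma exists_sum_mul_pow_eq {r : ℕ} {x : Fin r → K} (hx : x.Injective) (y : Fin r → K) :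
    ∃ c : Fin r → K, ∀ i : Fin r, ∑ l, c l * x l ^ (i : ℕ) = y i := by
  have hV : IsUnit (Matrix.vandermonde x) :=
    (Matrix.isUnit_iff_isUnit_det _).2 (Matrix.det_vandermonde_ne_zero_iff.2 hx).isUnit
  obtain ⟨c, hc⟩ := Matrix.vecMul_surjective_iff_isUnit.2 hV y
  exact ⟨c, fun i => congrFun hc i⟩

lemma exists_eq_sum_geom_of_isSolution {E : LinearRecurrence K} (hs : E.charPoly.Splits)
    (hE : E.charPoly.Separable) {u : ℕ → K} (hu : E.IsSolution u) :
    ∃ c x : Fin E.order → K, ∀ k, u k = ∑ l, c l * x l ^ k := by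
  obtain ⟨x, hx, hroot⟩ : ∃ x : Fin E.order → K, x.Injective ∧ ∀ l, E.charPoly.IsRoot (x l) := by
    have hdeg := Polynomial.natDegree_eq_of_degree_eq_some E.charPoly_degree_eq_order
    exact hdeg ▸ exists_injective_isRoot hs hE
  obtain ⟨c, hc⟩ := exists_sum_mul_pow_eq hx fun i => u i
  have hgeom : E.IsSolution (∑ l, c l • fun k => x l ^ k) :=
    E.solSpace.sum_mem fun l _ =>
      E.solSpace.smul_mem _ ((E.geom_sol_iff_root_charPoly _).2 (hroot l))
  have huv : u = ∑ l, c l • fun k => x l ^ k :=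
    (E.eq_iff_eqOn_range_order _ _ hu hgeom).2 fun i hi => by
      simpa using (hc ⟨i, by simpa using hi⟩).symm
  exact ⟨c, x, fun k => by simpa using congrFun huv k⟩

end Recurrence

section Hankel

/-- The `r × r` Hankel matrix `(g (i + j))` of a sequence. -/
def hankelMatrix {A : Type*} (g : ℕ → A) (r : ℕ) : Matrix (Fin r) (Fin r) A :=
  Matrix.of fun i j => g (i + j)

@[simp]
lemma hankelMatrix_apply {A : Type*} (g : ℕ → A) {r : ℕ} (i j : Fin r) :
    hankelMatrix g r i j = g (i + j) :=
  rfl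

variable {A B K : Type*} [CommRing A] [CommRing B] [Field K]

/-- The solution, by Cramer's rule and hence up to the factor `det (hankelMatrix g r)`, of the
linear system that expresses `g r, …, g (2 * r - 1)` through an order-`r` recurrence. Clearing the
denominator makes it polynomial in `g`. -/
def recCoeff (g : ℕ → A) (r : ℕ) : Fin r → A :=
  (hankelMatrix g r).cramer fun i => g (i + r)

/-- The characteristic polynomial of the order-`r` recurrence satisfied by `g 0, …, g (2 * r - 1)`,
scaled by `det (hankelMatrix g r)`. -/
def recPoly (g : ℕ → A) (r : ℕ) : Polynomial A :=
  Polynomial.monomial r (hankelMatrix g r).det -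
    ∑ j : Fin r, Polynomial.monomial (j : ℕ) (recCoeff g r j)

/-- The discriminant of `recPoly g r`, up to a factor: the resultant with the derivative, taken in
formal degrees `r` and `r - 1` so that it commutes with ring homomorphisms. -/
def recDiscr (g : ℕ → A) (r : ℕ) : A :=
  (recPoly g r).resultant (recPoly g r).derivative r (r - 1)

lemma hankelMatrix_comp (φ : A →+* B) (g : ℕ → A) (r : ℕ) :
    hankelMatrix (φ ∘ g) r = φ.mapMatrix (hankelMatrix g r) :=
  rfl

lemma det_hankelMatrix_comp (φ : A →+* B) (g : ℕ → A) (r : ℕ) :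
    (hankelMatrix (φ ∘ g) r).det = φ (hankelMatrix g r).det := by
  rw [hankelMatrix_comp, RingHom.map_det]

lemma recCoeff_comp (φ : A →+* B) (g : ℕ → A) (r : ℕ) (j : Fin r) :
    recCoeff (φ ∘ g) r j = φ (recCoeff g r j) := by
  simp only [recCoeff, Matrix.cramer_apply, RingHom.map_det, hankelMatrix_comp]
  congr 1
  ext i k
  simp [Matrix.updateCol_apply, apply_ite φ]

lemma recPoly_comp (φ : A →+* B) (g : ℕ → A) (r : ℕ) :
    recPoly (φ ∘ g) r = (recPoly g r).map φ := by
  simp [recPoly, recCoeff_comp, det_hankelMatrix_comp, Polynomial.map_sum]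

lemma recDiscr_comp (φ : A →+* B) (g : ℕ → A) (r : ℕ) :
    recDiscr (φ ∘ g) r = φ (recDiscr g r) := by
  rw [recDiscr, recPoly_comp, Polynomial.derivative_map, Polynomial.resultant_map_map, recDiscr]

lemma sum_recCoeff_mul (g : ℕ → A) {r : ℕ} (i : Fin r) :
    ∑ j, recCoeff g r j * g (i + j) = (hankelMatrix g r).det * g (i + r) := by
  have h := congrFun (Matrix.mulVec_cramer (hankelMatrix g r) fun i => g (i + r)) i
  simpa [Matrix.mulVec, dotProduct, recCoeff, mul_comm] using h

/-- The order-`r` linear recurrence satisfied by `g 0, …, g (2 * r - 1)`; meaningful only when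
`det (hankelMatrix g r) ≠ 0`. -/
abbrev hankelRecurrence (g : ℕ → K) (r : ℕ) : LinearRecurrence K :=
  ⟨r, (hankelMatrix g r).det⁻¹ • recCoeff g r⟩

variable {g : ℕ → K} {r : ℕ}

lemma recPoly_eq_C_mul_charPoly (hdet : (hankelMatrix g r).det ≠ 0) :
    recPoly g r = Polynomial.C (hankelMatrix g r).det * (hankelRecurrence g r).charPoly := by
  simp [recPoly, LinearRecurrence.charPoly, hankelRecurrence, mul_sub, Finset.mul_sum,
    Polynomial.C_mul_monomial, mul_inv_cancel_left₀ hdet]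

lemma natDegree_recPoly (hdet : (hankelMatrix g r).det ≠ 0) : (recPoly g r).natDegree = r := by
  rw [recPoly_eq_C_mul_charPoly hdet, Polynomial.natDegree_C_mul hdet]
  exact Polynomial.natDegree_eq_of_degree_eq_some (hankelRecurrence g r).charPoly_degree_eq_order

lemma recDiscr_ne_zero_iff_separable [CharZero K] (hdet : (hankelMatrix g r).det ≠ 0) :
    recDiscr g r ≠ 0 ↔ (recPoly g r).Separable := by
  have hp : recPoly g r ≠ 0 := by
    rw [recPoly_eq_C_mul_charPoly hdet]
    exact mul_ne_zero (Polynomial.C_ne_zero.2 hdet) (hankelRecurrence g r).charPoly_monic.ne_zero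
  have hres : recDiscr g r = (recPoly g r).resultant (recPoly g r).derivative := by
    rw [recDiscr, Polynomial.natDegree_derivative, natDegree_recPoly hdet]
  rw [hres, Ne, Polynomial.resultant_eq_zero_iff]
  simp [hp, Polynomial.Separable]

lemma exists_eq_sum_geom [IsAlgClosed K] (hdet : (hankelMatrix g r).det ≠ 0)
    (hsep : (recPoly g r).Separable) :
    ∃ c x : Fin r → K, ∀ k < 2 * r, g k = ∑ l, c l * x l ^ k := by
  have hg : ∀ i < r, g (i + r) = ∑ j, (hankelRecurrence g r).coeffs j * g (i + j) := fun i hi => by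
    apply mul_left_cancel₀ hdet
    rw [← sum_recCoeff_mul g ⟨i, hi⟩]
    simp [Finset.mul_sum, mul_assoc, mul_inv_cancel_left₀ hdet]
  have hE : (hankelRecurrence g r).charPoly.Separable :=
    (recPoly_eq_C_mul_charPoly hdet ▸ hsep).of_mul_right
  obtain ⟨c, x, hcx⟩ := exists_eq_sum_geom_of_isSolution (IsAlgClosed.splits _) hE
    ((hankelRecurrence g r).is_sol_mkSol fun i => g i)
  exact ⟨c, x, fun k hk => (mkSol_eq_of_lt _ hg (by simpa [two_mul] using hk)).symm.trans (hcx k)⟩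

/-- The sequence `1, 0, …, 0, 1, 0, …` with ones in positions `0` and `r`, at which the generic
conditions can be checked by hand: its order-`r` recurrence is `g (i + r) = g i`, with the simple
characteristic polynomial `X ^ r - 1`. -/
def cyclicSeq (K : Type*) [Field K] (r : ℕ) : ℕ → K :=
  fun k => if k = 0 ∨ k = r then 1 else 0

lemma hankelMatrix_cyclicSeq [NeZero r] :
    hankelMatrix (cyclicSeq K r) r = (Equiv.neg (Fin r)).permMatrix K := by
  ext i j
  have hij : (i + j : ℕ) = 0 ∨ (i + j : ℕ) = r ↔ -i = j := by
    rw [Fin.ext_iff, Fin.val_neg']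
    rcases Nat.eq_zero_or_pos (i : ℕ) with hi | hi
    · rw [hi, Nat.sub_zero, Nat.mod_self]
      omega
    · rw [Nat.mod_eq_of_lt (by omega)]
      omega
  simp only [hankelMatrix_apply, cyclicSeq, hij, Equiv.Perm.permMatrix, PEquiv.toMatrix_apply]
  simp

lemma det_hankelMatrix_cyclicSeq_ne_zero [NeZero r] :
    (hankelMatrix (cyclicSeq K r) r).det ≠ 0 := by
  rw [hankelMatrix_cyclicSeq, Matrix.det_permutation]
  exact ((Equiv.Perm.sign (Equiv.neg (Fin r))).isUnit.map (Int.castRingHom K)).ne_zero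

lemma recCoeff_cyclicSeq [NeZero r] :
    recCoeff (cyclicSeq K r) r = Pi.single 0 (hankelMatrix (cyclicSeq K r) r).det := by
  refine Matrix.cramer_row_self _ _ 0 fun i => ?_
  rw [hankelMatrix_apply, cyclicSeq, cyclicSeq]
  congr 1
  rw [Fin.val_zero]
  have := NeZero.ne r
  exact propext (by omega)

lemma recPoly_cyclicSeq [NeZero r] :
    recPoly (cyclicSeq K r) r =
      Polynomial.C (hankelMatrix (cyclicSeq K r) r).det * (Polynomial.X ^ r - Polynomial.C 1) := by
  rw [recPoly, recCoeff_cyclicSeq, Finset.sum_eq_single 0]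
  · simp [mul_sub, Polynomial.C_mul_X_pow_eq_monomial]
  · intro j _ hj
    simp [hj]
  · simp

lemma separable_recPoly_cyclicSeq [CharZero K] [NeZero r] :
    (recPoly (cyclicSeq K r) r).Separable := by
  rw [recPoly_cyclicSeq]
  exact (Polynomial.separable_X_pow_sub_C 1 (NeZero.ne _) one_ne_zero).unit_mul
    (Polynomial.isUnit_C.2 det_hankelMatrix_cyclicSeq_ne_zero.isUnit)

theorem holdsGenerically_separable_recPoly [CharZero K] [NeZero r] {N : ℕ} (hr : r < N) :
    HoldsGenerically fun h : Fin N → K =>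
      (hankelMatrix (zeroExtend h) r).det ≠ 0 ∧ (recPoly (zeroExtend h) r).Separable := by
  let x : ℕ → MvPolynomial (Fin N) K := zeroExtend X
  have heval (h : Fin N → K) :
      eval h ((hankelMatrix x r).det * recDiscr x r) ≠ 0 ↔
        (hankelMatrix (zeroExtend h) r).det ≠ 0 ∧ (recPoly (zeroExtend h) r).Separable := by
    rw [map_mul, ← det_hankelMatrix_comp, ← recDiscr_comp, eval_comp_zeroExtend_X, mul_ne_zero_iff]
    exact and_congr_right recDiscr_ne_zero_iff_separable
  have hmodel : zeroExtend (fun i : Fin N => cyclicSeq K r i) = cyclicSeq K r :=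
    zeroExtend_restrict fun k hk => by
      simp [cyclicSeq, (Nat.zero_lt_of_lt hr |>.trans_le hk).ne', (hr.trans_le hk).ne']
  simp only [← heval]
  refine holdsGenerically_eval_ne_zero ((heval fun i => cyclicSeq K r i).2 ?_)
  rw [hmodel]
  exact ⟨det_hankelMatrix_cyclicSeq_ne_zero, separable_recPoly_cyclicSeq⟩

end Hankel

section LowRank

variable {K ι κ : Type*} [Field K] [Fintype ι] [DecidableEq ι] [Fintype κ]

lemma card_le_card_of_det_mul_ne_zero {M : Matrix ι κ K} {L : Matrix κ ι K}
    (h : (M * L).det ≠ 0) : Fintype.card ι ≤ Fintype.card κ := by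
  rw [← Matrix.rank_of_isUnit _ ((Matrix.isUnit_iff_isUnit_det _).2 h.isUnit)]
  exact (Matrix.rank_mul_le_left M L).trans M.rank_le_card_width

lemma le_of_det_hankelMatrix_ne_zero {g : ℕ → K} {d r s : ℕ} (hs : 2 * s ≤ d + 2) {a b : Fin r → K}
    (hg : ∀ k ≤ d, g k = ∑ l, a l ^ (d - k) * b l ^ k) (hdet : (hankelMatrix g s).det ≠ 0) :
    s ≤ r := by
  let V : Matrix (Fin r) (Fin s) K := Matrix.rectVandermonde b a s
  have hfactor : hankelMatrix g s =
      V.transpose * (Matrix.diagonal (fun l => a l ^ (d + 2 - 2 * s)) * V) := by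
    ext i j
    rw [hankelMatrix_apply, hg _ (by omega), Matrix.mul_apply]
    refine Finset.sum_congr rfl fun l _ => ?_
    have hexp : d - (i + j : ℕ) = (i.rev : ℕ) + (d + 2 - 2 * s) + (j.rev : ℕ) := by
      simp only [Fin.val_rev]
      omega
    simp only [V, hexp, Matrix.diagonal_mul, Matrix.transpose_apply, Matrix.rectVandermonde_apply]
    ring
  rw [hfactor] at hdet
  simpa using card_le_card_of_det_mul_ne_zero hdet

end LowRank

section TensorRank

variable {m n r : ℕ} {T : Tensor m n}

lemma vandSet_subset_symSet : vandSet m n r ⊆ symSet m n r :=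
  fun _ ⟨ab, h⟩ => ⟨fun k => vand n (ab k).1 (ab k).2, h⟩

lemma symSet_subset_cpSet : symSet m n r ⊆ cpSet m n r :=
  fun _ ⟨v, h⟩ => ⟨fun k _ => v k, h⟩

lemma brank_le_cpRank (hT : T ∈ cpSet m n r) : brank T ≤ cpRank T :=
  Nat.sInf_le (subset_closure (Nat.sInf_mem (s := {r | T ∈ cpSet m n r}) ⟨r, hT⟩))

lemma cpRank_le_symRank (hT : T ∈ symSet m n r) : cpRank T ≤ symRank T :=
  Nat.sInf_le (symSet_subset_cpSet (Nat.sInf_mem (s := {r | T ∈ symSet m n r}) ⟨r, hT⟩))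

lemma symRank_le_vandRank (hT : T ∈ vandSet m n r) : symRank T ≤ vandRank T :=
  Nat.sInf_le (vandSet_subset_symSet (Nat.sInf_mem (s := {r | T ∈ vandSet m n r}) ⟨r, hT⟩))

variable {ι κ : Type*}

/-- The flattening of a tensor into a matrix, along a splitting `e` of its modes into row modes `ι`
and column modes `κ`. -/
def flattening (e : ι ⊕ κ ≃ Fin m) (T : Tensor m n) : Matrix (ι → Fin n) (κ → Fin n) ℂ :=
  Matrix.of fun p q => T (Sum.elim p q ∘ e.symm)

lemma continuous_flattening (e : ι ⊕ κ ≃ Fin m) :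
    Continuous (flattening e : Tensor m n → Matrix (ι → Fin n) (κ → Fin n) ℂ) :=
  continuous_matrix fun _ _ => continuous_apply _

lemma exists_flattening_eq_mul (e : ι ⊕ κ ≃ Fin m) (hT : T ∈ cpSet m n r) :
    ∃ (M : Matrix (ι → Fin n) (Fin r) ℂ) (L : Matrix (Fin r) (κ → Fin n) ℂ),
      flattening e T = M * L := by
  let _ : Fintype ι := Fintype.ofInjective (e ∘ .inl) (e.injective.comp Sum.inl_injective)
  let _ : Fintype κ := Fintype.ofInjective (e ∘ .inr) (e.injective.comp Sum.inr_injective)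
  obtain ⟨u, hu⟩ := hT
  refine ⟨Matrix.of fun p k => ∏ t, u k (e (.inl t)) (p t),
    Matrix.of fun k q => ∏ t, u k (e (.inr t)) (q t), ?_⟩
  ext p q
  simp only [flattening, Matrix.of_apply, Matrix.mul_apply, hu, ← e.prod_comp,
    Fintype.prod_sum_type, Function.comp_apply, Equiv.symm_apply_apply, Sum.elim_inl, Sum.elim_inr]

-- A nonzero minor of the flattening stays nonzero nearby, so it also bounds the border rank.
lemma card_le_of_mem_closure_cpSet {S : Type*} [Fintype S] [DecidableEq S] (e : ι ⊕ κ ≃ Fin m)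
    (p : S → ι → Fin n) (q : S → κ → Fin n) (hdet : ((flattening e T).submatrix p q).det ≠ 0)
    (hT : T ∈ closure (cpSet m n r)) : Fintype.card S ≤ r := by
  have hopen : IsOpen {T : Tensor m n | ((flattening e T).submatrix p q).det ≠ 0} :=
    isOpen_ne.preimage ((continuous_flattening e).matrix_submatrix p q).matrix_det
  obtain ⟨T', hdet', hT'⟩ := mem_closure_iff.1 hT _ hopen hdet
  obtain ⟨M, L, hML⟩ := exists_flattening_eq_mul e hT'
  rw [Set.mem_ofPred_eq, hML, Matrix.submatrix_mul _ _ p id q Function.bijective_id] at hdet'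
  simpa using card_le_card_of_det_mul_ne_zero hdet'

end TensorRank

section HankelTensor

lemma exists_sum_val_eq {m n k : ℕ} (hn : 0 < n) (hk : k ≤ (n - 1) * m) :
    ∃ i : Fin m → Fin n, ∑ j, (i j : ℕ) = k := by
  induction m generalizing k with
  | zero => exact ⟨Fin.elim0, by simpa using (Nat.le_zero.1 hk).symm⟩
  | succ m ih =>
    rw [mul_add_one] at hk
    obtain ⟨i, hi⟩ := @ih (k - min k (n - 1)) (by omega)
    refine ⟨Fin.cons ⟨min k (n - 1), by omega⟩ i, ?_⟩
    simp only [Fin.sum_univ_succ, Fin.cons_zero, Fin.cons_succ, hi]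
    omega

variable {m n r s : ℕ} {H : Tensor m n} {h : Fin ((n - 1) * m + 1) → ℂ}

lemma sum_val_le (i : Fin m → Fin n) : ∑ j, (i j : ℕ) ≤ (n - 1) * m := by
  calc ∑ j, (i j : ℕ) ≤ ∑ _j : Fin m, (n - 1) :=
        Finset.sum_le_sum fun j _ => Nat.le_sub_one_of_lt (i j).2
    _ = (n - 1) * m := by simp [mul_comm]

lemma prod_vand (a b : ℂ) (i : Fin m → Fin n) :
    ∏ j, vand n a b (i j) = a ^ ((n - 1) * m - ∑ j, (i j : ℕ)) * b ^ ∑ j, (i j : ℕ) := by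
  simp only [vand, Finset.prod_mul_distrib, Finset.prod_pow_eq_pow_sum]
  rw [Finset.sum_tsub_distrib _ fun j _ => Nat.le_sub_one_of_lt (i j).2]
  simp [mul_comm]

lemma IsHankel.apply_eq_zeroExtend (hH : IsHankel H h) (i : Fin m → Fin n) :
    H i = zeroExtend h (∑ j, (i j : ℕ)) := by
  rw [hH i, zeroExtend_apply_of_lt]

-- Over `ℂ` the weight `c` of a geometric sequence is absorbed into its base as a `d`-th power.
lemma IsHankel.mem_vandSet (hH : IsHankel H h) (hd : (n - 1) * m ≠ 0) (hr : (n - 1) * m < 2 * r)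
    (hdet : (hankelMatrix (zeroExtend h) r).det ≠ 0)
    (hsep : (recPoly (zeroExtend h) r).Separable) : H ∈ vandSet m n r := by
  obtain ⟨c, x, hcx⟩ := exists_eq_sum_geom hdet hsep
  choose a ha using fun l => IsAlgClosed.exists_pow_nat_eq (c l) (Nat.pos_of_ne_zero hd)
  refine ⟨fun l => (a l, a l * x l), fun i => ?_⟩
  have hi := sum_val_le i
  rw [hH.apply_eq_zeroExtend, hcx _ (hi.trans_lt hr)]
  refine Finset.sum_congr rfl fun l _ => ?_
  rw [prod_vand, mul_pow, ← mul_assoc, ← pow_add, Nat.sub_add_cancel hi, ha]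

lemma IsHankel.le_of_mem_vandSet (hH : IsHankel H h) (hn : 0 < n) (hs : 2 * s ≤ (n - 1) * m + 2)
    (hdet : (hankelMatrix (zeroExtend h) s).det ≠ 0) (hr : H ∈ vandSet m n r) : s ≤ r := by
  obtain ⟨ab, hab⟩ := hr
  refine le_of_det_hankelMatrix_ne_zero hs (a := fun l => (ab l).1) (b := fun l => (ab l).2)
    (fun k hk => ?_) hdet
  obtain ⟨i, rfl⟩ := exists_sum_val_eq hn hk
  rw [← hH.apply_eq_zeroExtend, hab]
  simp only [prod_vand]

lemma IsHankel.le_of_mem_closure_cpSet (hH : IsHankel H h) (hn : 0 < n)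
    (hs : s ≤ (n - 1) * (m / 2) + 1) (hdet : (hankelMatrix (zeroExtend h) s).det ≠ 0)
    (hr : H ∈ closure (cpSet m n r)) : s ≤ r := by
  have hhalf : (n - 1) * (m / 2) ≤ (n - 1) * (m - m / 2) := Nat.mul_le_mul_left _ (by omega)
  choose p hp using fun i : Fin s =>
    exists_sum_val_eq (m := m / 2) (k := i) hn (by omega)
  choose q hq using fun i : Fin s =>
    exists_sum_val_eq (m := m - m / 2) (k := i) hn (by omega)
  let e : Fin (m / 2) ⊕ Fin (m - m / 2) ≃ Fin m :=
    finSumFinEquiv.trans (finCongr (Nat.add_sub_of_le (Nat.div_le_self m 2)))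
  have hsub : (flattening e H).submatrix p q = hankelMatrix (zeroExtend h) s := by
    ext i j
    simp only [flattening, Matrix.submatrix_apply, Matrix.of_apply, hH.apply_eq_zeroExtend,
      hankelMatrix_apply, ← e.sum_comp, Fintype.sum_sum_type, Function.comp_apply,
      Equiv.symm_apply_apply, Sum.elim_inl, Sum.elim_inr, hp, hq]
  simpa using card_le_of_mem_closure_cpSet e p q (hsub ▸ hdet) hr

end HankelTensor

theorem stmt_13_general (n m : ℕ) (hn : 2 ≤ n) (hm : 1 ≤ m) :
    ∃ P : MvPolynomial (Fin ((n - 1) * m + 1)) ℂ, P ≠ 0 ∧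
      ∀ (H : Tensor m n) (h : Fin ((n - 1) * m + 1) → ℂ),
        IsHankel H h → MvPolynomial.eval h P ≠ 0 →
        vandRank H = (n - 1) * m / 2 + 1 ∧
        (n - 1) * (m / 2) + 1 ≤ brank H ∧ brank H ≤ cpRank H ∧
        cpRank H ≤ symRank H ∧ symRank H ≤ vandRank H := by
  have hd : 0 < (n - 1) * m := Nat.mul_pos (by omega) hm
  have hhalf : (n - 1) * (m / 2) < (n - 1) * m :=
    Nat.mul_lt_mul_of_pos_left (by omega) (by omega)
  obtain ⟨P, hP, hgen⟩ :=
    (holdsGenerically_separable_recPoly (K := ℂ) (r := (n - 1) * m / 2 + 1)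
      (N := (n - 1) * m + 1) (by omega)).and
    (holdsGenerically_separable_recPoly (r := (n - 1) * (m / 2) + 1) (by omega))
  refine ⟨P, hP, fun H h hH hPh => ?_⟩
  obtain ⟨⟨hdet, hsep⟩, hdet', -⟩ := hgen h hPh
  have hvand := hH.mem_vandSet hd.ne' (by omega) hdet hsep
  have hsym := vandSet_subset_symSet hvand
  have hcp := symSet_subset_cpSet hsym
  exact ⟨le_antisymm (Nat.sInf_le hvand)
      (le_csInf ⟨_, hvand⟩ fun r => hH.le_of_mem_vandSet (by omega) (by omega) hdet),
    le_csInf ⟨_, subset_closure hcp⟩ fun r => hH.le_of_mem_closure_cpSet (by omega) le_rfl hdet',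
    brank_le_cpRank hcp, cpRank_le_symRank hsym, symRank_le_vandRank hvand⟩

/-- For a generic Hankel tensor of odd order `m = 2m₀+1`,
`rank_V(H) = m₀(n-1) + ⌈n/2⌉` and `m₀(n-1)+1 ≤ brank(H) ≤ rank(H) ≤ rank_S(H) ≤ rank_V(H)`. -/
theorem stmt_13 (n m₀ : ℕ) (hn : 2 ≤ n) (hm : 1 ≤ m₀) :
    ∃ P : MvPolynomial (Fin ((n - 1) * (2 * m₀ + 1) + 1)) ℂ, P ≠ 0 ∧
      ∀ (H : Tensor (2 * m₀ + 1) n) (h : Fin ((n - 1) * (2 * m₀ + 1) + 1) → ℂ),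
        IsHankel H h → MvPolynomial.eval h P ≠ 0 →
        vandRank H = m₀ * (n - 1) + (n + 1) / 2 ∧
        m₀ * (n - 1) + 1 ≤ brank H ∧ brank H ≤ cpRank H ∧
        cpRank H ≤ symRank H ∧ symRank H ≤ vandRank H := by
  have hvand : (n - 1) * (2 * m₀ + 1) / 2 + 1 = m₀ * (n - 1) + (n + 1) / 2 := by
    rw [show (n - 1) * (2 * m₀ + 1) = 2 * (m₀ * (n - 1)) + (n - 1) by ring]
    omega
  have hborder : (n - 1) * ((2 * m₀ + 1) / 2) + 1 = m₀ * (n - 1) + 1 := by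
    rw [show (2 * m₀ + 1) / 2 = m₀ by omega, mul_comm]
  exact hvand ▸ hborder ▸ stmt_13_general n (2 * m₀ + 1) hn (by omega)
end
end

section
/- Let n ≥ 2. There exists a nonzero polynomial P in 3(n−1)+1 complex variables such that for every Hankel tensor H of order 3 and dimension n whose parameter vector h satisfies P(h) ≠ 0, the border rank of H satisfies brank(H) ≥ ⌊(3n−1)/2⌋. -/
open scoped BigOperators
open MvPolynomial

noncomputable section

/-!
The Koszul flattening on three slices turns a rank-one tensor into a Kronecker product of a singular
`3 × 3` cross-product matrix with a matrix of rank one, so it has rank at most `2`. Hence a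
nonvanishing minor of size `2k` of the flattening of `T` shows `k ≤ brank T`, and passing to the
closure is harmless because the minor is continuous. On Hankel tensors such a minor is a polynomial
in the parameter vector, so it suffices to find one Hankel tensor on which it does not vanish. With
`s = ⌊(n - 1) / 2⌋` and the slices `0`, `s`, `n - 1`, the Hankel tensor whose parameter vector is
the unit vector at position `n - 1 + s` works: its flattening pairs indices of opposite weights,
and on a suitable set of `2 (n + s)` indices it is unimodular.
-/

section MatrixRank

open scoped Matrix Kronecker

variable {K l m n p : Type*} [Field K] [Fintype n] [Fintype p]

lemma rank_add_le (A B : Matrix m n K) : (A + B).rank ≤ A.rank + B.rank := by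
  rw [Matrix.rank, Matrix.mulVecLin_add]
  exact (Submodule.finrank_mono (LinearMap.range_add_le _ _)).trans
    (Submodule.finrank_add_le_finrank_add_finrank _ _)

lemma rank_sum_le {κ : Type*} (t : Finset κ) (A : κ → Matrix m n K) :
    (∑ k ∈ t, A k).rank ≤ ∑ k ∈ t, (A k).rank :=
  Finset.le_sum_of_subadditive (fun B : Matrix m n K => B.rank) Matrix.rank_zero.le rank_add_le t A

lemma rank_kronecker_le [Finite l] [Finite m] (A : Matrix l n K) (B : Matrix m p K) :
    (A ⊗ₖ B).rank ≤ A.rank * B.rank := by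
  classical
  have := Fintype.ofFinite l
  have := Fintype.ofFinite m
  let bl := Pi.basisFun K l
  let bm := Pi.basisFun K m
  let bn := Pi.basisFun K n
  let bp := Pi.basisFun K p
  rw [(A ⊗ₖ B).rank_eq_finrank_range_toLin (bl.tensorProduct bm) (bn.tensorProduct bp),
    Matrix.toLin_kronecker, TensorProduct.range_map, ← TensorProduct.range_mapIncl,
    A.rank_eq_finrank_range_toLin bl bn, B.rank_eq_finrank_range_toLin bm bp,
    ← Module.finrank_tensorProduct]
  exact LinearMap.finrank_range_le _

lemma rank_lt_card_of_det_eq_zero [DecidableEq n] {A : Matrix n n K} (hA : A.det = 0) :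
    A.rank < Fintype.card n := by
  refine A.rank_le_card_width.lt_of_ne fun h => ?_
  have hcols : LinearIndependent K A.col := by
    rw [linearIndependent_iff_card_eq_finrank_span, ← h, A.rank_eq_finrank_span_cols, Set.finrank]
  exact ((Matrix.isUnit_iff_isUnit_det A).1
    (Matrix.linearIndependent_cols_iff_isUnit.1 hcols)).ne_zero hA

end MatrixRank

section SkewSymmetric

open scoped Matrix

lemma det_submatrix_sumElim_of_transpose_eq_neg {R m ι : Type*} [CommRing R] [Fintype ι]
    [DecidableEq ι] {A : Matrix m m R} (hA : Aᵀ = -A) {e f : ι → m}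
    (he : A.submatrix e e = 0) (hf : A.submatrix f f = 0) :
    (A.submatrix (Sum.elim e f) (Sum.elim f e)).det =
      (-1) ^ Fintype.card ι * (A.submatrix e f).det ^ 2 := by
  have hfe : A.submatrix f e = -(A.submatrix e f)ᵀ := by
    rw [Matrix.transpose_submatrix, hA, Matrix.submatrix_neg, Pi.neg_apply, Pi.neg_apply, neg_neg]
  have hblocks : A.submatrix (Sum.elim e f) (Sum.elim f e) =
      Matrix.fromBlocks (A.submatrix e f) (A.submatrix e e) (A.submatrix f f)
        (A.submatrix f e) := by
    ext (x | x) (y | y) <;> rfl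
  rw [hblocks, he, hf, Matrix.det_fromBlocks_zero₁₂, hfe, Matrix.det_neg, Matrix.det_transpose]
  ring

end SkewSymmetric

section CrossMatrix

open scoped Matrix

variable {R : Type*} [CommRing R]

/-- The skew-symmetric matrix of `v ⨯₃ ·`, as a linear function of `v`. -/
def crossMatrix : (Fin 3 → R) →ₗ[R] Matrix (Fin 3) (Fin 3) R :=
  LinearMap.toMatrix'.toLinearMap ∘ₗ crossProduct

lemma crossMatrix_eq (v : Fin 3 → R) :
    crossMatrix v = !![0, -v 2, v 1; v 2, 0, -v 0; -v 1, v 0, 0] := by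
  ext α β
  fin_cases α <;> fin_cases β <;> simp [crossMatrix, LinearMap.toMatrix'_apply, cross_apply]

lemma det_crossMatrix (v : Fin 3 → R) : (crossMatrix v).det = 0 := by
  rw [crossMatrix_eq, Matrix.det_fin_three]
  simp only [Matrix.of_apply, Matrix.cons_val]
  ring

lemma crossMatrix_transpose (v : Fin 3 → R) : (crossMatrix v)ᵀ = -crossMatrix v := by
  ext α β
  fin_cases α <;> fin_cases β <;> simp [crossMatrix_eq]

lemma map_crossMatrix {S : Type*} [CommRing S] (f : R →+* S) (v : Fin 3 → R) :
    (crossMatrix v).map f = crossMatrix (f ∘ v) := by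
  ext α β
  fin_cases α <;> fin_cases β <;> simp [crossMatrix_eq]

lemma rank_crossMatrix_le {K : Type*} [Field K] (v : Fin 3 → K) : (crossMatrix v).rank ≤ 2 :=
  Nat.le_of_lt_succ (by simpa using rank_lt_card_of_det_eq_zero (det_crossMatrix v))

end CrossMatrix

section KoszulFlattening

open scoped Matrix Kronecker

variable {R ι : Type*} [CommRing R]

/-- The Koszul flattening of an order-3 tensor `T` after restricting the first mode to the three
slices at the positions `s`: the `3 × 3` block matrix obtained from `crossMatrix` by
substituting the slices for the coordinates of the vector. -/
def koszulFlattening (s : Fin 3 → ι) (T : (Fin 3 → ι) → R) :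
    Matrix (Fin 3 × ι) (Fin 3 × ι) R :=
  Matrix.of fun p q => crossMatrix (fun γ => T ![s γ, p.2, q.2]) p.1 q.1

lemma koszulFlattening_apply (s : Fin 3 → ι) (T : (Fin 3 → ι) → R) (p q : Fin 3 × ι) :
    koszulFlattening s T p q = crossMatrix (fun γ => T ![s γ, p.2, q.2]) p.1 q.1 :=
  rfl

lemma map_koszulFlattening {S : Type*} [CommRing S] (f : R →+* S) (s : Fin 3 → ι)
    (T : (Fin 3 → ι) → R) :
    (koszulFlattening s T).map f = koszulFlattening s (f ∘ T) := by
  ext p q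
  exact congr_fun₂ (map_crossMatrix f fun γ => T ![s γ, p.2, q.2]) p.1 q.1

lemma koszulFlattening_transpose (s : Fin 3 → ι) {T : (Fin 3 → ι) → R}
    (hT : ∀ a i j, T ![a, i, j] = T ![a, j, i]) :
    (koszulFlattening s T)ᵀ = -koszulFlattening s T := by
  ext p q
  simp only [koszulFlattening_apply, Matrix.transpose_apply, Matrix.neg_apply, hT _ q.2]
  exact congr_fun₂ (crossMatrix_transpose fun γ => T ![s γ, p.2, q.2]) p.1 q.1

lemma koszulFlattening_sum_prod {κ : Type*} [Fintype κ] (s : Fin 3 → ι)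
    (u : κ → Fin 3 → ι → R) :
    koszulFlattening s (fun i => ∑ k, ∏ j, u k j (i j)) =
      ∑ k, crossMatrix (u k 0 ∘ s) ⊗ₖ Matrix.vecMulVec (u k 1) (u k 2) := by
  ext p q
  have hslices : (fun γ => ∑ k, ∏ j, u k j (![s γ, p.2, q.2] j)) =
      ∑ k, (u k 1 p.2 * u k 2 q.2) • (u k 0 ∘ s) := by
    ext γ
    simp [Fin.prod_univ_three, mul_assoc, mul_comm (u _ 0 _)]
  simp [koszulFlattening_apply, hslices, Matrix.sum_apply, Matrix.vecMulVec_apply, mul_comm]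

lemma rank_koszulFlattening_le {n r : ℕ} (s : Fin 3 → Fin n) {T : Tensor 3 n}
    (hT : T ∈ cpSet 3 n r) : (koszulFlattening s T).rank ≤ 2 * r := by
  obtain ⟨u, hu⟩ := hT
  rw [funext hu, koszulFlattening_sum_prod]
  calc (∑ k, crossMatrix (u k 0 ∘ s) ⊗ₖ Matrix.vecMulVec (u k 1) (u k 2)).rank
      ≤ ∑ k, (crossMatrix (u k 0 ∘ s)).rank * (Matrix.vecMulVec (u k 1) (u k 2)).rank :=
        (rank_sum_le _ _).trans (Finset.sum_le_sum fun _ _ => rank_kronecker_le _ _)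
    _ ≤ ∑ _k : Fin r, 2 * 1 := Finset.sum_le_sum fun _ _ =>
        Nat.mul_le_mul (rank_crossMatrix_le _) (Matrix.rank_vecMulVec_le _ _)
    _ = 2 * r := by simp [mul_comm]

lemma continuous_koszulFlattening {n : ℕ} (s : Fin 3 → Fin n) :
    Continuous fun T : Tensor 3 n => koszulFlattening s T := by
  refine continuous_matrix fun p q => ?_
  simp only [koszulFlattening_apply]
  exact ((crossMatrix (R := ℂ)).continuous_of_finiteDimensional.comp
    (continuous_pi fun _ => continuous_apply _)).matrix_elem p.1 q.1

end KoszulFlattening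

section BorderRank

lemma mem_cpSet_card {m n : ℕ} [NeZero m] (T : Tensor m n) :
    T ∈ cpSet m n (Fintype.card (Fin m → Fin n)) := by
  let e := Fintype.equivFin (Fin m → Fin n)
  refine ⟨fun k j y => if y = e.symm k j then (if j = 0 then T (e.symm k) else 1) else 0,
    fun i => ?_⟩
  rw [Equiv.sum_comp e.symm
    (fun x => ∏ j, if i j = x j then (if j = 0 then T x else 1) else 0)]
  simp [Finset.prod_ite_zero, ← funext_iff]

lemma mem_closure_cpSet_brank {m n : ℕ} [NeZero m] (T : Tensor m n) :
    T ∈ closure (cpSet m n (brank T)) :=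
  Nat.sInf_mem (s := {r | T ∈ closure (cpSet m n r)}) ⟨_, subset_closure (mem_cpSet_card T)⟩

lemma card_le_two_mul_brank_of_det_ne_zero {n : ℕ} {ι : Type*} [Fintype ι] [DecidableEq ι]
    (s : Fin 3 → Fin n) (e f : ι → Fin 3 × Fin n) {T : Tensor 3 n}
    (hT : ((koszulFlattening s T).submatrix e f).det ≠ 0) :
    Fintype.card ι ≤ 2 * brank T := by
  have hcont : Continuous fun S : Tensor 3 n => ((koszulFlattening s S).submatrix e f).det :=
    ((continuous_koszulFlattening s).matrix_submatrix e f).matrix_det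
  obtain ⟨S, hSdet, hS⟩ := mem_closure_iff.1 (mem_closure_cpSet_brank T) _
    (isOpen_compl_singleton.preimage hcont) hT
  calc Fintype.card ι = ((koszulFlattening s S).submatrix e f).rank :=
        (Matrix.rank_of_det_ne_zero hSdet).symm
    _ ≤ (koszulFlattening s S).rank := Matrix.rank_submatrix_le _ _ _
    _ ≤ 2 * brank T := rank_koszulFlattening_le s hS

end BorderRank

section Hankel

variable {R : Type*} {m n : ℕ}

/-- The position in the parameter vector of the entry of a Hankel tensor at `i`. -/
def hankelIndex (i : Fin m → Fin n) : Fin ((n - 1) * m + 1) :=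
  ⟨∑ j, (i j : ℕ), Nat.lt_succ_of_le <| by
    simpa [mul_comm] using
      Finset.sum_le_card_nsmul Finset.univ (fun j => (i j : ℕ)) (n - 1) fun j _ =>
        Nat.le_pred_of_lt (i j).isLt⟩

/-- The Hankel tensor with parameter vector `h`; with `h = MvPolynomial.X` it is the generic
Hankel tensor. -/
def hankelTensor (h : Fin ((n - 1) * m + 1) → R) : (Fin m → Fin n) → R :=
  fun i => h (hankelIndex i)

lemma IsHankel.eq_hankelTensor {T : Tensor m n} {h : Fin ((n - 1) * m + 1) → ℂ}
    (hT : IsHankel T h) : T = hankelTensor h :=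
  funext hT

lemma hankelTensor_single_apply [Zero R] [One R] (k : Fin ((n - 1) * m + 1)) (i : Fin m → Fin n) :
    hankelTensor (Pi.single k (1 : R)) i = if ∑ j, (i j : ℕ) = k then 1 else 0 := by
  simp [hankelTensor, hankelIndex, Pi.single_apply, Fin.ext_iff]

end Hankel

section KoszulMinor

open scoped Matrix

variable {R : Type*} [CommRing R] {n s : ℕ} (hs : 2 * s < n)

/-- The positions `0`, `s`, `n - 1` of the slices used for `koszulMinor`. -/
def sliceIndex : Fin 3 → Fin n := ![⟨0, by omega⟩, ⟨s, by omega⟩, ⟨n - 1, by omega⟩]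

/-- The weight of a row or column index of the Koszul flattening. The flattening of
`monomialTensor` is supported on pairs of indices of opposite weights. -/
def koszulWeight (p : Fin 3 × Fin n) : ℤ := p.2 - sliceIndex hs p.1

/-- The absolute values of the weights selected for `koszulMinor`. -/
def absWeight : Fin n ⊕ Fin s → ℕ := Sum.elim (fun i => i) (fun a => a + 1)

/-- Indices of the Koszul flattening of weights `0, …, n - 1` and `1, …, s`. -/
def posIndex : Fin n ⊕ Fin s → Fin 3 × Fin n :=
  Sum.elim (fun i => (0, i)) (fun a => (1, ⟨s + (a + 1), by omega⟩))

/-- Indices of the Koszul flattening of weights `0, …, -(n - 1)` and `-1, …, -s`. -/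
def negIndex : Fin n ⊕ Fin s → Fin 3 × Fin n :=
  Sum.elim (fun i => (2, i.rev)) (fun a => (1, ⟨s - (a + 1), by omega⟩))

lemma koszulWeight_posIndex (x : Fin n ⊕ Fin s) :
    koszulWeight hs (posIndex hs x) = absWeight x := by
  rcases x with i | a <;> simp [koszulWeight, posIndex, sliceIndex, absWeight]

lemma koszulWeight_negIndex (x : Fin n ⊕ Fin s) :
    koszulWeight hs (negIndex hs x) = -absWeight x := by
  rcases x with i | a
  · simp only [koszulWeight, negIndex, sliceIndex, absWeight, Sum.elim_inl, Fin.val_rev,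
      Matrix.cons_val]
    omega
  · simp [koszulWeight, negIndex, sliceIndex, absWeight]

/-- A minor of size `2 (n + s)` of the Koszul flattening of `T`, used as a certificate for
`n + s ≤ brank T`. Its columns are listed so that the flattening of `monomialTensor` becomes
block diagonal. -/
def koszulMinor (T : (Fin 3 → Fin n) → R) : R :=
  ((koszulFlattening (sliceIndex hs) T).submatrix
    (Sum.elim (posIndex hs) (negIndex hs)) (Sum.elim (negIndex hs) (posIndex hs))).det

lemma map_koszulMinor {S : Type*} [CommRing S] (f : R →+* S) (T : (Fin 3 → Fin n) → R) :
    f (koszulMinor hs T) = koszulMinor hs (f ∘ T) := by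
  rw [koszulMinor, RingHom.map_det, RingHom.mapMatrix_apply, ← Matrix.submatrix_map,
    map_koszulFlattening, koszulMinor]

lemma eval_koszulMinor_hankelTensor_X (h : Fin ((n - 1) * 3 + 1) → R) :
    eval h (koszulMinor hs (hankelTensor X)) = koszulMinor hs (hankelTensor h) := by
  rw [map_koszulMinor]
  congr 1
  ext i
  simp [hankelTensor]

lemma add_le_brank_of_koszulMinor_ne_zero {T : Tensor 3 n} (hT : koszulMinor hs T ≠ 0) :
    n + s ≤ brank T := by
  have := card_le_two_mul_brank_of_det_ne_zero _ _ _ hT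
  simp only [Fintype.card_sum, Fintype.card_fin] at this
  omega

/-- The Hankel tensor of a binary monomial (up to a scalar) of degree `3 (n - 1)`: its parameter
vector is the unit vector at position `n - 1 + s`. It witnesses that `koszulMinor` does not vanish
identically on Hankel tensors. -/
def monomialTensor (R : Type*) [CommRing R] : (Fin 3 → Fin n) → R :=
  hankelTensor (Pi.single ⟨n - 1 + s, by omega⟩ 1)

lemma monomialTensor_apply (i : Fin 3 → Fin n) :
    monomialTensor hs R i = if (i 0 + i 1 + i 2 : ℕ) = n - 1 + s then 1 else 0 := by
  simp [monomialTensor, hankelTensor_single_apply, Fin.sum_univ_three]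

-- If `{α, β, γ} = {0, 1, 2}`, then the entry at `(α, i)`, `(β, j)` is, up to sign, the entry
-- of the slice `γ` at `(i, j)`. As the three slice positions add up to `n - 1 + s`, it is nonzero
-- exactly when the weights of `(α, i)` and `(β, j)` cancel.
lemma koszulFlattening_monomialTensor_apply (p q : Fin 3 × Fin n) :
    koszulFlattening (sliceIndex hs) (monomialTensor hs R) p q =
      if koszulWeight hs p + koszulWeight hs q = 0 then crossMatrix 1 p.1 q.1 else 0 := by
  obtain ⟨α, i⟩ := p
  obtain ⟨β, j⟩ := q
  simp only [koszulFlattening_apply, crossMatrix_eq, monomialTensor_apply, koszulWeight]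
  fin_cases α <;> fin_cases β <;> simp [sliceIndex] <;> grind

lemma koszulFlattening_monomialTensor_transpose :
    (koszulFlattening (sliceIndex hs) (monomialTensor hs R))ᵀ =
      -koszulFlattening (sliceIndex hs) (monomialTensor hs R) :=
  koszulFlattening_transpose _ fun a i j => by
    rw [monomialTensor_apply, monomialTensor_apply]
    exact if_congr (by simp [add_right_comm]) rfl rfl

lemma koszulFlattening_monomialTensor_posIndex :
    (koszulFlattening (sliceIndex hs) (monomialTensor hs R)).submatrix
      (posIndex hs) (posIndex hs) = 0 := by
  ext x y
  simp only [Matrix.submatrix_apply, koszulFlattening_monomialTensor_apply, koszulWeight_posIndex]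
  rcases x with i | a <;> rcases y with j | b <;> simp [posIndex, absWeight, crossMatrix_eq] <;>
    omega

lemma koszulFlattening_monomialTensor_negIndex :
    (koszulFlattening (sliceIndex hs) (monomialTensor hs R)).submatrix
      (negIndex hs) (negIndex hs) = 0 := by
  ext x y
  simp only [Matrix.submatrix_apply, koszulFlattening_monomialTensor_apply, koszulWeight_negIndex]
  rcases x with i | a <;> rcases y with j | b <;> simp [negIndex, absWeight, crossMatrix_eq] <;>
    omega

/-- The matrix of the injection `e_a ↦ e_{a+1}`, which matches the weights `1, …, s` of the middle
slice with those of the outer slices. -/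
def shiftMatrix (R : Type*) [CommRing R] : Matrix (Fin n) (Fin s) R :=
  (1 : Matrix (Fin n) (Fin n) R).submatrix id fun a => ⟨a + 1, by omega⟩

lemma shiftMatrix_transpose_mul_self : (shiftMatrix hs R)ᵀ * shiftMatrix hs R = 1 := by
  rw [shiftMatrix, Matrix.transpose_submatrix, Matrix.transpose_one,
    ← Matrix.submatrix_mul _ _ _ _ _ Function.bijective_id, one_mul]
  exact Matrix.submatrix_one _ fun a b hab => by simpa [Fin.ext_iff] using hab

lemma koszulFlattening_monomialTensor_posIndex_negIndex :
    (koszulFlattening (sliceIndex hs) (monomialTensor hs R)).submatrix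
      (posIndex hs) (negIndex hs) =
        Matrix.fromBlocks 1 (-shiftMatrix hs R) (-(shiftMatrix hs R)ᵀ) 0 := by
  ext x y
  simp only [Matrix.submatrix_apply, koszulFlattening_monomialTensor_apply, koszulWeight_posIndex,
    koszulWeight_negIndex, add_neg_eq_zero, Nat.cast_inj]
  rcases x with i | a <;> rcases y with j | b <;>
    simp [posIndex, negIndex, absWeight, crossMatrix_eq, shiftMatrix, Matrix.one_apply,
      Fin.ext_iff] <;>
    split_ifs <;> simp

lemma koszulMinor_monomialTensor :
    koszulMinor hs (monomialTensor hs R) = (-1) ^ (n + s) := by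
  rw [koszulMinor, det_submatrix_sumElim_of_transpose_eq_neg
    (koszulFlattening_monomialTensor_transpose hs) (koszulFlattening_monomialTensor_posIndex hs)
    (koszulFlattening_monomialTensor_negIndex hs),
    koszulFlattening_monomialTensor_posIndex_negIndex, Matrix.det_fromBlocks_one₁₁,
    Matrix.neg_mul, Matrix.mul_neg, neg_neg, shiftMatrix_transpose_mul_self, zero_sub,
    Matrix.det_neg, Matrix.det_one]
  simp [← pow_mul]

lemma koszulMinor_hankelTensor_X_ne_zero [Nontrivial R] :
    koszulMinor hs (hankelTensor (X : _ → MvPolynomial (Fin ((n - 1) * 3 + 1)) R)) ≠ 0 := by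
  intro h0
  have heval := eval_koszulMinor_hankelTensor_X hs (R := R)
    (Pi.single ⟨n - 1 + s, by omega⟩ 1)
  rw [h0, map_zero] at heval
  exact (isUnit_one.neg.pow (n + s)).ne_zero ((koszulMinor_monomialTensor hs).symm.trans heval.symm)

end KoszulMinor

/-- A generic Hankel tensor of order 3 and dimension `n` has border
rank at least `⌊(3n-1)/2⌋`. -/
theorem stmt_14 (n : ℕ) (hn : 2 ≤ n) :
    ∃ P : MvPolynomial (Fin ((n - 1) * 3 + 1)) ℂ, P ≠ 0 ∧
      ∀ (H : Tensor 3 n) (h : Fin ((n - 1) * 3 + 1) → ℂ), IsHankel H h →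
        MvPolynomial.eval h P ≠ 0 → (3 * n - 1) / 2 ≤ brank H := by
  have hs : 2 * ((n - 1) / 2) < n := by omega
  refine ⟨koszulMinor hs (hankelTensor X), koszulMinor_hankelTensor_X_ne_zero hs,
    fun H h hH hP => ?_⟩
  rw [eval_koszulMinor_hankelTensor_X, ← hH.eq_hankelTensor] at hP
  calc (3 * n - 1) / 2 = n + (n - 1) / 2 := by omega
    _ ≤ brank H := add_le_brank_of_koszulMinor_ne_zero hs hP
end
end

section
/- Let n ≥ 2, p = ⌊n/2⌋, and r = ⌊(3n−1)/2⌋. Let H : (Fin 3 → Fin n) → ℂ be the Hankel tensor of order 3 and dimension n whose parameter vector h ∈ ℂ^{3(n−1)+1} is given by h_l = 1 if l = r−1 and h_l = 0 otherwise; that is, H(i,j,k) = 1 if i+j+k = r−1 (0-based indices) and 0 otherwise. Let φ : (⋀^p ℂ^n) ⊗ ℂ^n → (⋀^{p+1} ℂ^n) ⊗ ℂ^n be the linear map (Koszul flattening of H) determined on basis elements by φ((e_{j_1} ∧ ⋯ ∧ e_{j_p}) ⊗ e_i) = Σ_{j,k} H(i,j,k) (e_{j_1} ∧ ⋯ ∧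 e_{j_p} ∧ e_j) ⊗ e_k, where e_0, …, e_{n−1} is the standard basis of ℂ^n. Then the rank of φ (the dimension of its range) equals binom(n−1, p) · r. -/
open scoped BigOperators
open MvPolynomial

noncomputable section

open TensorProduct in
/-- The wedge `v_0 ∧ ⋯ ∧ v_(p-1)` as an element of the `p`-th exterior power of `ℂ^n`. -/
def wedge (n p : ℕ) (v : Fin p → (Fin n → ℂ)) : ⋀[ℂ]^p (Fin n → ℂ) :=
  ⟨ExteriorAlgebra.ιMulti ℂ p v, ExteriorAlgebra.ιMulti_range ℂ p (Set.mem_range_self v)⟩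

open TensorProduct in
/-- Shortcut instance, avoiding a typeclass-synthesis timeout. -/
noncomputable instance extTensorAddCommGroup (n p : ℕ) :
    AddCommGroup ((⋀[ℂ]^p (Fin n → ℂ)) ⊗[ℂ] (Fin n → ℂ)) :=
  TensorProduct.addCommGroup

/-!
Put `A = ℂ[X]/(X^r)` and `a = ∑ j, X^j e_j`. As `H(i,j,k)` is the coefficient of `X^(r-1)` in
`X^(i+j+k)`, the flattening `φ` is the Koszul differential `x ↦ x ∧ a` on `⋀^p ℂ^n ⊗ A`,
restricted to coefficients of degree `< n` and followed by the pairing of each coefficient with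
`1, X, …, X^(n-1)` under the top-coefficient form. The `e_0`-coordinate of `a` is `1`, so
contraction by it is a contracting homotopy, and the differential has rank `binom(n-1,p)·r`.

Neither the restriction nor the pairing lowers this rank, by two Vandermonde arguments along the
moment curve `v(t) = ∑ j, t^j e_j`. Put `F(t) = ∑ d < r, t^d X^(r-1-d)`, so that
`(t - X) F(t) = t^r`. If `ω ∧ v(t) = 0`, then `ω ⊗ F(t)` is a boundary up to coefficients of degree
`< n`; for `ω` a wedge of `p` points of the curve, these are `p` linear relations between the
`r - n ≤ p` elements `ω ⊗ X^l` with `n ≤ l < r`. Conversely, a cycle `∑ d, y_d ⊗ X^d` in degree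
`p + 1` killed by the pairing only involves `d < r - n` and satisfies `(∑ d, t^d y_d) ∧ v(t) = 0`
for all `t`. Hence each `y_d` is annihilated by every wedge of `r - n` points of the curve, which
forces `y_d = 0` as `(p + 1) + (r - n) ≤ n`.
-/

namespace KoszulFlattening

open TensorProduct ExteriorAlgebra Module

section ExteriorPower

variable {R M : Type*} [CommRing R] [AddCommGroup M] [Module R M]

theorem ιMulti_snoc {k : ℕ} (w : Fin k → M) (m : M) :
    ιMulti R (k + 1) (Fin.snoc w m : Fin (k + 1) → M) = ιMulti R k w * ι R m := by
  simp only [ιMulti_apply, List.ofFn_succ', List.concat_eq_append, List.prod_append,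
    Fin.snoc_castSucc, Fin.snoc_last, List.prod_singleton]

theorem ιMulti_mul_ι_self {k : ℕ} (w : Fin k → M) (i : Fin k) :
    ιMulti R k w * ι R (w i) = 0 := by
  rw [← ιMulti_snoc]
  exact AlternatingMap.map_eq_zero_of_eq _ _ (by simp) (Fin.castSucc_lt_last i).ne

theorem ι_mul_ιMulti_self {k : ℕ} (w : Fin k → M) (i : Fin k) :
    ι R (w i) * ιMulti R k w = 0 := by
  have h := ιMulti_succ_apply (R := R) (Matrix.vecCons (w i) w)
  rw [Matrix.cons_val_zero, Matrix.tail_cons] at h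
  rw [← h]
  exact AlternatingMap.map_eq_zero_of_eq _ _ (by simp) (Fin.succ_ne_zero i).symm

theorem mul_ι_mem_exteriorPower {q : ℕ} {x : ExteriorAlgebra R M} (hx : x ∈ ⋀[R]^q M) (m : M) :
    x * ι R m ∈ ⋀[R]^(q + 1) M := by
  rw [exteriorPower, pow_succ]
  exact Submodule.mul_mem_mul hx ⟨m, rfl⟩

theorem mul_ι_mul_ι_swap (x : ExteriorAlgebra R M) (m m' : M) :
    x * ι R m * ι R m' = -(x * ι R m' * ι R m) := by
  rw [mul_assoc, mul_assoc, ← mul_neg, eq_neg_of_add_eq_zero_left (ι_add_mul_swap m m')]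

/-- Right contraction of the exterior algebra by a linear form: the antiderivation with
`contract d (x ∧ m) = d m • x - contract d x ∧ m`. -/
def contract (d : Dual R M) : ExteriorAlgebra R M →ₗ[R] ExteriorAlgebra R M :=
  (CliffordAlgebra.contractRight (Q := (0 : QuadraticForm R M))).flip d

theorem contract_mul_ι (d : Dual R M) (x : ExteriorAlgebra R M) (m : M) :
    contract d (x * ι R m) = d m • x - contract d x * ι R m :=
  CliffordAlgebra.contractRight_mul_ι ..

theorem contract_eq_zero (d : Dual R M) {x : ExteriorAlgebra R M} (hx : x ∈ ⋀[R]^0 M) :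
    contract d x = 0 := by
  rw [exteriorPower, pow_zero, Submodule.mem_one] at hx
  obtain ⟨c, rfl⟩ := hx
  exact CliffordAlgebra.contractRight_algebraMap ..

theorem contract_mem_exteriorPower (d : Dual R M) {q : ℕ} {x : ExteriorAlgebra R M}
    (hx : x ∈ ⋀[R]^(q + 1) M) : contract d x ∈ ⋀[R]^q M := by
  suffices h : ⋀[R]^(q + 1) M ≤ (⋀[R]^q M).comap (contract d) from h hx
  induction q generalizing x with
  | zero =>
    rw [exteriorPower, pow_succ, Submodule.mul_le]
    rintro y hy _ ⟨m, rfl⟩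
    rw [Submodule.mem_comap, contract_mul_ι, contract_eq_zero d hy, zero_mul, sub_zero]
    exact Submodule.smul_mem _ _ hy
  | succ q ih =>
    rw [exteriorPower, pow_succ, Submodule.mul_le]
    rintro y hy _ ⟨m, rfl⟩
    rw [Submodule.mem_comap, contract_mul_ι]
    exact Submodule.sub_mem _ (Submodule.smul_mem _ _ hy)
      (mul_ι_mem_exteriorPower (ih hy hy) m)

theorem eq_contract_mul_ι {d : Dual R M} {m : M} (hd : d m = 1) {x : ExteriorAlgebra R M}
    (hx : x * ι R m = 0) : x = contract d x * ι R m := by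
  have h := contract_mul_ι d x m
  rw [hx, map_zero, hd, one_smul] at h
  exact sub_eq_zero.1 h.symm

theorem mul_ιMulti_eq_zero {d : Dual R M} {k : ℕ} {w : Fin k → M} {i : Fin k} (hd : d (w i) = 1)
    {x : ExteriorAlgebra R M} (hx : x * ι R (w i) = 0) : x * ιMulti R k w = 0 := by
  rw [eq_contract_mul_ι hd hx, mul_assoc, ι_mul_ιMulti_self, mul_zero]

theorem eq_zero_of_forall_mem_mul_ι_eq_zero {I : Type*} (b : Basis I R M) {q : ℕ}
    {x : ExteriorAlgebra R M} (hx : x ∈ ⋀[R]^q M) {s : Finset I} (hs : q < s.card)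
    (h : ∀ i ∈ s, x * ι R (b i) = 0) : x = 0 := by
  classical
  induction q generalizing x s with
  | zero =>
    obtain ⟨i, hi⟩ := Finset.card_pos.1 hs
    rw [eq_contract_mul_ι (d := b.coord i) (by simp) (h i hi), contract_eq_zero _ hx, zero_mul]
  | succ q ih =>
    obtain ⟨i, hi⟩ := Finset.card_pos.1 (Nat.zero_lt_of_lt hs)
    have hcontract : contract (b.coord i) x = 0 := by
      refine ih (contract_mem_exteriorPower _ hx) (s := s.erase i)
        (by rw [Finset.card_erase_of_mem hi]; lia) fun j hj => ?_
      obtain ⟨hji, hjs⟩ := Finset.mem_erase.1 hj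
      have hzero := contract_mul_ι (b.coord i) x (b j)
      rw [h j hjs, map_zero, Basis.coord_apply, Basis.repr_self_apply, if_neg hji, zero_smul,
        zero_sub] at hzero
      exact neg_eq_zero.1 hzero.symm
    rw [eq_contract_mul_ι (d := b.coord i) (by simp) (h i hi), hcontract, zero_mul]

theorem eq_zero_of_forall_mul_ιMulti_eq_zero {I : Type*} [Fintype I] (b : Basis I R M) {q k : ℕ}
    (hqk : q + k ≤ Fintype.card I) {x : ExteriorAlgebra R M} (hx : x ∈ ⋀[R]^q M)
    (h : ∀ w : Fin k → M, x * ιMulti R k w = 0) : x = 0 := by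
  induction k generalizing q x with
  | zero => simpa using h 0
  | succ k ih =>
    refine eq_zero_of_forall_mem_mul_ι_eq_zero b hx (s := Finset.univ)
      (by rw [Finset.card_univ]; lia) fun i _ => ?_
    refine ih (q := q + 1) (by lia) (mul_ι_mem_exteriorPower hx _) fun w => ?_
    have hcons := h (Matrix.vecCons (b i) w)
    rwa [ιMulti_succ_apply, Matrix.cons_val_zero, Matrix.tail_cons, ← mul_assoc] at hcons

/-- Exterior multiplication `x ↦ x ∧ m` on the `q`-th exterior power. -/
def wedgeRight (q : ℕ) (m : M) : ⋀[R]^q M →ₗ[R] ⋀[R]^(q + 1) M :=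
  (LinearMap.mulRight R (ι R m)).restrict fun _ hx => mul_ι_mem_exteriorPower hx m

/-- Right contraction by a linear form, as a map between consecutive exterior powers. -/
def contractPower (q : ℕ) (d : Dual R M) : ⋀[R]^(q + 1) M →ₗ[R] ⋀[R]^q M :=
  (contract d).restrict fun _ hx => contract_mem_exteriorPower d hx

@[simp]
theorem coe_wedgeRight (q : ℕ) (m : M) (x : ⋀[R]^q M) :
    (wedgeRight q m x : ExteriorAlgebra R M) = x * ι R m := rfl

@[simp]
theorem coe_contractPower (q : ℕ) (d : Dual R M) (x : ⋀[R]^(q + 1) M) :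
    (contractPower q d x : ExteriorAlgebra R M) = contract d x := rfl

theorem wedgeRight_ιMulti (q : ℕ) (m : M) (w : Fin q → M) :
    wedgeRight q m (exteriorPower.ιMulti R q w) = exteriorPower.ιMulti R (q + 1) (Fin.snoc w m) :=
  Subtype.ext (ιMulti_snoc w m).symm

theorem wedgeRight_wedgeRight_self (q : ℕ) (m : M) (x : ⋀[R]^q M) :
    wedgeRight (q + 1) m (wedgeRight q m x) = 0 :=
  Subtype.ext <| by simp [mul_assoc]

theorem wedgeRight_wedgeRight_swap (q : ℕ) (m m' : M) (x : ⋀[R]^q M) :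
    wedgeRight (q + 1) m (wedgeRight q m' x) = -wedgeRight (q + 1) m' (wedgeRight q m x) :=
  Subtype.ext (mul_ι_mul_ι_swap _ m' m)

theorem wedgeRight_contractPower {q : ℕ} {d : Dual R M} {m : M} (hd : d m = 1)
    {x : ⋀[R]^(q + 1) M} (hx : wedgeRight (q + 1) m x = 0) :
    wedgeRight q m (contractPower q d x) = x :=
  Subtype.ext (eq_contract_mul_ι hd (congrArg Subtype.val hx)).symm

theorem contractPower_zero_wedgeRight (d : Dual R M) (m : M) (x : ⋀[R]^0 M) :
    contractPower 0 d (wedgeRight 0 m x) = d m • x :=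
  Subtype.ext <| by simp [contract_mul_ι, contract_eq_zero d x.2]

theorem contractPower_wedgeRight (q : ℕ) (d : Dual R M) (m : M) (x : ⋀[R]^(q + 1) M) :
    contractPower (q + 1) d (wedgeRight (q + 1) m x) =
      d m • x - wedgeRight q m (contractPower q d x) :=
  Subtype.ext <| by simp [contract_mul_ι]

theorem wedgeRight_sum_smul {I : Type*} [Fintype I] (q : ℕ) (c : I → R) (m : I → M)
    (x : ⋀[R]^q M) :
    wedgeRight q (∑ i, c i • m i) x = ∑ i, c i • wedgeRight q (m i) x :=
  Subtype.ext <| by simp [Finset.mul_sum]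

end ExteriorPower

section Koszul

variable {R M A I : Type*} [CommRing R] [AddCommGroup M] [Module R M] [CommRing A] [Algebra R A]
  [Fintype I] (b : I → M) (a : I → A) (q : ℕ)

variable (R) in
/-- The Koszul differential `x ↦ x ∧ ∑ i, a i • b i` of the vector `∑ i, a i • b i` of `A ⊗ M`,
on the exterior power `⋀^q M ⊗ A ≅ ⋀^q_A (A ⊗ M)`. -/
def koszul : ⋀[R]^q M ⊗[R] A →ₗ[R] ⋀[R]^(q + 1) M ⊗[R] A :=
  ∑ i, TensorProduct.map (wedgeRight q (b i)) (LinearMap.mulLeft R (a i))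

theorem koszul_tmul (x : ⋀[R]^q M) (c : A) :
    koszul R b a q (x ⊗ₜ c) = ∑ i, wedgeRight q (b i) x ⊗ₜ[R] (a i * c) := by
  simp only [koszul, LinearMap.sum_apply, map_tmul, LinearMap.mulLeft_apply]

theorem koszul_comp_koszul : koszul R b a (q + 1) ∘ₗ koszul R b a q = 0 := by
  refine TensorProduct.ext' fun x c => ?_
  simp only [LinearMap.comp_apply, koszul_tmul, map_sum, LinearMap.zero_apply]
  rw [← Fintype.sum_prod_type']
  refine Finset.sum_involution (fun ij _ => ij.swap) (fun ij _ => ?_) (fun ij _ hne heq => hne ?_)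
    (fun _ _ => Finset.mem_univ _) (fun _ _ => Prod.swap_swap _)
  · rw [Prod.fst_swap, Prod.snd_swap, wedgeRight_wedgeRight_swap, mul_left_comm, ← add_tmul,
      neg_add_cancel, zero_tmul]
  · rw [show ij.1 = ij.2 from congrArg Prod.snd heq, wedgeRight_wedgeRight_self, zero_tmul]

variable {b a} {d : Dual R M}

theorem sum_smul_tmul_mul (hd : ∑ i, d (b i) • a i = 1) {N : Type*} [AddCommGroup N] [Module R N]
    (x : N) (c : A) : ∑ i, (d (b i) • x) ⊗ₜ[R] (a i * c) = x ⊗ₜ c := by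
  simp only [smul_tmul, ← smul_mul_assoc, ← tmul_sum, ← Finset.sum_mul, hd, one_mul]

theorem contractPower_koszul_zero (hd : ∑ i, d (b i) • a i = 1) :
    (contractPower 0 d).rTensor A ∘ₗ koszul R b a 0 = LinearMap.id := by
  refine TensorProduct.ext' fun x c => ?_
  simp only [LinearMap.comp_apply, koszul_tmul, map_sum, LinearMap.rTensor_tmul,
    contractPower_zero_wedgeRight, sum_smul_tmul_mul hd, LinearMap.id_apply]

theorem contractPower_koszul_add_koszul_contractPower (hd : ∑ i, d (b i) • a i = 1) :
    (contractPower (q + 1) d).rTensor A ∘ₗ koszul R b a (q + 1) +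
      koszul R b a q ∘ₗ (contractPower q d).rTensor A = LinearMap.id := by
  refine TensorProduct.ext' fun x c => ?_
  simp only [LinearMap.add_apply, LinearMap.comp_apply, koszul_tmul, map_sum,
    LinearMap.rTensor_tmul, contractPower_wedgeRight, ← Finset.sum_add_distrib, ← add_tmul,
    sub_add_cancel, sum_smul_tmul_mul hd, LinearMap.id_apply]

theorem range_koszul_eq_ker (hd : ∑ i, d (b i) • a i = 1) :
    LinearMap.range (koszul R b a q) = LinearMap.ker (koszul R b a (q + 1)) := by
  refine le_antisymm (LinearMap.range_le_ker_iff.2 (koszul_comp_koszul b a q)) fun x hx => ?_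
  have h := LinearMap.congr_fun (contractPower_koszul_add_koszul_contractPower q hd) x
  rw [LinearMap.add_apply, LinearMap.comp_apply, LinearMap.mem_ker.1 hx, map_zero, zero_add] at h
  exact ⟨_, h⟩

end Koszul

theorem finrank_range_koszul {K V A I : Type*} [Field K] [AddCommGroup V] [Module K V]
    [CommRing A] [Algebra K A] [FiniteDimensional K A] [Fintype I] {b : I → V} {a : I → A}
    {d : Dual K V} (hd : ∑ i, d (b i) • a i = 1) {n : ℕ} (hn : finrank K V = n + 1) (q : ℕ) :
    finrank K (LinearMap.range (koszul K b a q)) = n.choose q * finrank K A := by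
  have := FiniteDimensional.of_finrank_eq_succ hn
  induction q with
  | zero =>
    have inj : Function.Injective (koszul K b a 0) :=
      Function.LeftInverse.injective (LinearMap.congr_fun (contractPower_koszul_zero hd))
    rw [LinearMap.finrank_range_of_inj inj, finrank_tensorProduct, exteriorPower.finrank_eq,
      Nat.choose_zero_right, Nat.choose_zero_right]
  | succ q ih =>
    have h := LinearMap.finrank_range_add_finrank_ker (V := ⋀[K]^(q + 1) V ⊗[K] A)
      (V₂ := ⋀[K]^(q + 2) V ⊗[K] A) (koszul K b a (q + 1))
    rw [← range_koszul_eq_ker q hd, ih, finrank_tensorProduct, exteriorPower.finrank_eq, hn,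
      Nat.choose_succ_succ, add_mul] at h
    lia

section MomentCurve

variable {K V W : Type*} [Field K] [AddCommGroup V] [Module K V] [AddCommGroup W] [Module K W]

theorem eq_zero_of_sum_pow_smul_eq_zero {k r : ℕ} {t : Fin k → K} (ht : Function.Injective t)
    {y : ℕ → W} (hy : ∀ d < r, k ≤ d → y d = 0)
    (h : ∀ i, ∑ d ∈ Finset.range r, t i ^ d • y d = 0) {d : ℕ} (hd : d < r) : y d = 0 := by
  refine (forall_dual_apply_eq_zero_iff K (y d)).1 fun ℓ => ?_
  set P : Polynomial K := ∑ e ∈ Finset.range r, Polynomial.monomial e (ℓ (y e)) with hP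
  have hcoeff (e : ℕ) : P.coeff e = if e < r then ℓ (y e) else 0 := by
    simp [hP, Polynomial.finsetSum_coeff, Polynomial.coeff_monomial]
  have hdegree : P.degree < k := by
    rw [Polynomial.degree_lt_iff_coeff_zero]
    intro e hke
    rw [hcoeff]
    split_ifs with her
    exacts [by rw [hy e her hke, map_zero], rfl]
  have heval (i : Fin k) : P.eval (t i) = 0 := by
    have hℓ := congrArg ℓ (h i)
    simp only [map_sum, map_smul, smul_eq_mul, map_zero] at hℓ
    simpa only [hP, Polynomial.eval_finsetSum, Polynomial.eval_monomial, mul_comm] using hℓ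
  have hzero : P = 0 := Polynomial.eq_zero_of_degree_lt_of_eval_index_eq_zero ht.injOn
    (s := Finset.univ) (by simpa using hdegree) fun i _ => heval i
  rw [← Polynomial.coeff_zero d, ← hzero, hcoeff, if_pos hd]

/-- The moment curve `t ↦ (1, t, t², …)` in the coordinates of a basis. -/
def momentCurve {n : ℕ} (b : Basis (Fin n) K V) (t : K) : V := ∑ j : Fin n, t ^ (j : ℕ) • b j

theorem coord_zero_momentCurve {n : ℕ} [NeZero n] (b : Basis (Fin n) K V) (t : K) :
    b.coord 0 (momentCurve b t) = 1 := by
  simp [momentCurve, Finsupp.single_apply]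

theorem exists_basis_momentCurve {n : ℕ} [NeZero n] (b : Basis (Fin n) K V) {t : Fin n → K}
    (ht : Function.Injective t) :
    ∃ B : Basis (Fin n) K V, ∀ i, B i = momentCurve b (t i) := by
  have hrows : LinearIndependent K (Matrix.vandermonde t).row :=
    Matrix.linearIndependent_rows_of_det_ne_zero (Matrix.det_vandermonde_ne_zero_iff.2 ht)
  have hmap := hrows.map' b.equivFun.symm.toLinearMap b.equivFun.symm.ker
  refine ⟨basisOfLinearIndependentOfCardEqFinrank hmap (finrank_eq_card_basis b).symm,
    fun i => ?_⟩
  rw [coe_basisOfLinearIndependentOfCardEqFinrank, Function.comp_apply, LinearEquiv.coe_coe,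
    Basis.equivFun_symm_apply]
  rfl

end MomentCurve

theorem sub_mul_geom_sum₂_of_pow_eq_zero {A : Type*} [CommRing A] {r : ℕ} {x : A} (hx : x ^ r = 0)
    (u : A) (j : ℕ) :
    (u ^ j - x ^ j) * ∑ d ∈ Finset.range r, u ^ d * x ^ (r - 1 - d) =
      u ^ r * ∑ i ∈ Finset.range j, u ^ i * x ^ (j - 1 - i) := by
  rw [← geom_sum₂_mul, mul_assoc, mul_comm (u - x), geom_sum₂_mul, hx, sub_zero, mul_comm]

section Truncation

variable {K V A W : Type*} [Field K] [AddCommGroup V] [Module K V] [CommRing A] [Algebra K A]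
  [AddCommGroup W] [Module K W] {n r : ℕ} {b : Basis (Fin n) K V} {x : A}

theorem map_wedgeRight_momentCurve_tmul_eq_zero {q : ℕ} (hx : x ^ r = 0)
    {f : ⋀[K]^(q + 1) V ⊗[K] A →ₗ[K] W}
    (hkoszul : ∀ z, f (koszul K b (fun j : Fin n => x ^ (j : ℕ)) q z) = 0)
    (hpow : ∀ ω : ⋀[K]^(q + 1) V, ∀ j < n, f (ω ⊗ₜ[K] (x ^ j)) = 0) (t : K) (w : ⋀[K]^q V) :
    f (wedgeRight q (momentCurve b t) w ⊗ₜ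
      ∑ d ∈ Finset.range r, algebraMap K A t ^ d * x ^ (r - 1 - d)) = 0 := by
  set u := algebraMap K A t
  set g := ∑ d ∈ Finset.range r, u ^ d * x ^ (r - 1 - d)
  have hshift (j : Fin n) (ω : ⋀[K]^(q + 1) V) :
      f (ω ⊗ₜ (u ^ (j : ℕ) * g)) = f (ω ⊗ₜ (x ^ (j : ℕ) * g)) := by
    rw [← sub_eq_zero, ← map_sub, ← tmul_sub, ← sub_mul, sub_mul_geom_sum₂_of_pow_eq_zero hx,
      Finset.mul_sum, tmul_sum, map_sum]
    refine Finset.sum_eq_zero fun i _ => ?_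
    rw [← mul_assoc, ← pow_add, ← map_pow, ← Algebra.smul_def, tmul_smul, map_smul,
      hpow _ _ (by lia), smul_zero]
  have hz := hkoszul (w ⊗ₜ g)
  rw [koszul_tmul, map_sum] at hz
  rw [momentCurve, wedgeRight_sum_smul, sum_tmul, map_sum, ← hz]
  refine Finset.sum_congr rfl fun j _ => ?_
  rw [← hshift, smul_tmul, Algebra.smul_def, map_pow]

theorem map_ιMulti_momentCurve_tmul_eq_zero [NeZero n] {p : ℕ} (hr : r ≤ n + p) (hx : x ^ r = 0)
    {f : ⋀[K]^p V ⊗[K] A →ₗ[K] W}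
    (hker : ∀ z, koszul K b (fun j : Fin n => x ^ (j : ℕ)) p z = 0 → f z = 0)
    (hpow : ∀ ω : ⋀[K]^p V, ∀ j < n, f (ω ⊗ₜ[K] (x ^ j)) = 0)
    {s : Fin p → K} (hs : Function.Injective s) {l : ℕ} (hl : l < r) :
    f (exteriorPower.ιMulti K p (fun i => momentCurve b (s i)) ⊗ₜ (x ^ l)) = 0 := by
  set ω := exteriorPower.ιMulti K p fun i => momentCurve b (s i)
  have hgeom (i : Fin p) : f (ω ⊗ₜ
      ∑ d ∈ Finset.range r, algebraMap K A (s i) ^ d * x ^ (r - 1 - d)) = 0 := by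
    obtain _ | q := p
    · exact i.elim0
    have hwedge : wedgeRight (q + 1) (momentCurve b (s i)) ω = 0 :=
      Subtype.ext (ιMulti_mul_ι_self (fun i => momentCurve b (s i)) i)
    rw [← wedgeRight_contractPower (coord_zero_momentCurve b (s i)) hwedge]
    exact map_wedgeRight_momentCurve_tmul_eq_zero hx
      (fun z => hker _ (LinearMap.congr_fun (koszul_comp_koszul ..) z)) hpow _ _
  have hzero := eq_zero_of_sum_pow_smul_eq_zero hs (r := r)
    (y := fun d => f (ω ⊗ₜ[K] (x ^ (r - 1 - d)))) (fun d _ _ => hpow _ _ (by lia))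
    (fun i => by
      rw [← hgeom i, tmul_sum, map_sum]
      refine Finset.sum_congr rfl fun d _ => ?_
      rw [← map_pow, ← Algebra.smul_def, tmul_smul, map_smul])
    (show r - 1 - l < r by lia)
  rwa [show r - 1 - (r - 1 - l) = l by lia] at hzero

theorem eq_zero_of_map_ker_koszul_of_map_tmul_pow [NeZero n] (pb : PowerBasis K A)
    (hpb : pb.gen ^ pb.dim = 0) (t : Fin n ↪ K) {p : ℕ} (hdim : pb.dim ≤ n + p)
    {f : ⋀[K]^p V ⊗[K] A →ₗ[K] W}
    (hker : ∀ z, koszul K b (fun j : Fin n => pb.gen ^ (j : ℕ)) p z = 0 → f z = 0)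
    (hpow : ∀ ω : ⋀[K]^p V, ∀ j < n, f (ω ⊗ₜ[K] (pb.gen ^ j)) = 0) : f = 0 := by
  obtain ⟨B, hB⟩ := exists_basis_momentCurve b t.injective
  refine TensorProduct.ext <| exteriorPower.linearMap_ext <| B.ext_alternating fun s hs =>
    pb.basis.ext fun l => ?_
  simpa [hB] using map_ιMulti_momentCurve_tmul_eq_zero hdim hpb hker hpow
    (t.injective.comp hs) l.2

variable (pb : PowerBasis K A) (n) in
/-- The polynomials of degree less than `n` in the generator of a power basis. -/
def truncation : (Fin n → K) →ₗ[K] A :=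
  Fintype.linearCombination K fun j : Fin n => pb.gen ^ (j : ℕ)

theorem truncation_single (pb : PowerBasis K A) (j : Fin n) :
    truncation n pb (Pi.single j 1) = pb.gen ^ (j : ℕ) := by
  rw [truncation, Fintype.linearCombination_apply_single, one_smul]

theorem ker_koszul_sup_range_lTensor_truncation [NeZero n] (b : Basis (Fin n) K V)
    (pb : PowerBasis K A) (hpb : pb.gen ^ pb.dim = 0) (t : Fin n ↪ K) {p : ℕ}
    (hdim : pb.dim ≤ n + p) :
    LinearMap.ker (koszul K b (fun j : Fin n => pb.gen ^ (j : ℕ)) p) ⊔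
      LinearMap.range ((truncation n pb).lTensor (⋀[K]^p V)) = ⊤ := by
  by_contra hne
  obtain ⟨f, hf, hle⟩ := Submodule.exists_le_ker_of_lt_top (V := ⋀[K]^p V ⊗[K] A) _
    (lt_top_iff_ne_top.2 hne)
  refine hf (eq_zero_of_map_ker_koszul_of_map_tmul_pow pb hpb t hdim
    (fun z hz => hle (Submodule.mem_sup_left hz)) fun ω j hj => hle ?_)
  refine Submodule.mem_sup_right ⟨ω ⊗ₜ Pi.single ⟨j, hj⟩ 1, ?_⟩
  rw [LinearMap.lTensor_tmul, truncation_single]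

end Truncation

section MomentCurveRelations

variable {K V : Type*} [Field K] [AddCommGroup V] [Module K V] {n : ℕ} {b : Basis (Fin n) K V}

theorem eq_zero_of_wedgeRight_momentCurve_sum_eq_zero [NeZero n] (t : Fin n ↪ K) {q m : ℕ}
    (hqm : q + m ≤ n) {y : ℕ → ⋀[K]^q V}
    (h : ∀ s, wedgeRight q (momentCurve b s) (∑ d ∈ Finset.range m, s ^ d • y d) = 0) {d : ℕ}
    (hd : d < m) : y d = 0 := by
  obtain ⟨B, hB⟩ := exists_basis_momentCurve b t.injective
  suffices hmul : (LinearMap.mulLeft K (y d : ExteriorAlgebra K V)).compAlternatingMap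
      (ιMulti K m) = 0 from
    Subtype.ext <| eq_zero_of_forall_mul_ιMulti_eq_zero B (by rwa [Fintype.card_fin]) (y d).2
      fun w => AlternatingMap.congr_fun hmul w
  refine B.ext_alternating fun s hs => ?_
  refine eq_zero_of_sum_pow_smul_eq_zero (t.injective.comp hs)
    (y := fun e => (y e : ExteriorAlgebra K V) * ιMulti K m fun i => B (s i))
    (fun e he hme => absurd he hme.not_gt) (fun i => ?_) hd
  have hzero := congrArg Subtype.val (h (t (s i)))
  rw [← hB, coe_wedgeRight] at hzero
  have hdual : b.coord 0 (B (s i)) = 1 := by rw [hB, coord_zero_momentCurve]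
  simpa [Finset.sum_mul] using mul_ιMulti_eq_zero (w := fun i => B (s i)) hdual hzero

end MomentCurveRelations

section TopCoefficients

variable {K V N A : Type*} [Field K] [AddCommGroup V] [Module K V] [AddCommGroup N] [Module K N]
  [CommRing A] [Algebra K A] {n : ℕ} (pb : PowerBasis K A)

/-- Evaluation of a linear form on the second factor of a tensor product. -/
def slice (ℓ : Dual K A) : N ⊗[K] A →ₗ[K] N := TensorProduct.rid K N ∘ₗ ℓ.lTensor N

theorem slice_tmul (ℓ : Dual K A) (x : N) (c : A) : slice ℓ (x ⊗ₜ[K] c) = ℓ c • x := by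
  rw [slice, LinearMap.comp_apply, LinearMap.lTensor_tmul, LinearEquiv.coe_coe,
    TensorProduct.rid_tmul]

/-- The coefficient of the highest power in the expansion in a power basis. -/
def topForm : Dual K A := pb.basis.constr K fun i => if (i : ℕ) + 1 = pb.dim then 1 else 0

variable {pb}

theorem topForm_gen_pow (hpb : pb.gen ^ pb.dim = 0) (l : ℕ) :
    topForm pb (pb.gen ^ l) = if l + 1 = pb.dim then 1 else 0 := by
  obtain hl | hl := lt_or_ge l pb.dim
  · rw [topForm, ← pb.basis_eq_pow ⟨l, hl⟩, Basis.constr_basis]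
  · rw [pow_eq_zero_of_le hl hpb, map_zero, if_neg (by lia)]

/-- Evaluation at `t` of the reduced polynomial expression in the generator. -/
def evalForm (pb : PowerBasis K A) (t : K) : Dual K A := pb.basis.constr K fun i => t ^ (i : ℕ)

theorem evalForm_gen_pow (t : K) {l : ℕ} (hl : l < pb.dim) :
    evalForm pb t (pb.gen ^ l) = t ^ l := by
  rw [evalForm, ← pb.basis_eq_pow ⟨l, hl⟩, Basis.constr_basis]

variable (n pb) in
/-- The vector of top coefficients of the products of an element with the first `n` powers of the
generator. -/
def topCoefficients : A →ₗ[K] (Fin n → K) :=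
  LinearMap.pi fun k : Fin n => topForm pb ∘ₗ LinearMap.mulLeft K (pb.gen ^ (k : ℕ))

theorem topCoefficients_gen_pow (hpb : pb.gen ^ pb.dim = 0) (d : ℕ) (k : Fin n) :
    topCoefficients n pb (pb.gen ^ d) k = if (k : ℕ) + d + 1 = pb.dim then 1 else 0 := by
  rw [topCoefficients, LinearMap.pi_apply, LinearMap.comp_apply, LinearMap.mulLeft_apply,
    ← pow_add, topForm_gen_pow hpb]

theorem exists_eq_sum_tmul_gen_pow (X : N ⊗[K] A) :
    ∃ y : ℕ → N, X = ∑ d ∈ Finset.range pb.dim, y d ⊗ₜ[K] (pb.gen ^ d) := by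
  obtain ⟨y, rfl⟩ := TensorProduct.eq_repr_basis_right pb.basis X
  refine ⟨fun d => if hd : d < pb.dim then y ⟨d, hd⟩ else 0, ?_⟩
  rw [Finset.sum_range, Finsupp.sum_fintype _ _ (by simp)]
  simp

theorem exists_eq_sum_tmul_gen_pow_of_topCoefficients_eq_zero (hpb : pb.gen ^ pb.dim = 0)
    {X : N ⊗[K] A} (hX : (topCoefficients n pb).lTensor N X = 0) :
    ∃ y : ℕ → N, X = ∑ d ∈ Finset.range (pb.dim - n), y d ⊗ₜ[K] (pb.gen ^ d) := by
  obtain ⟨y, rfl⟩ := exists_eq_sum_tmul_gen_pow (pb := pb) X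
  refine ⟨y, (Finset.sum_subset (by simp) fun d hd hdn => ?_).symm⟩
  rw [Finset.mem_range] at hd hdn
  have hslice := congrArg
    (slice (LinearMap.proj (⟨pb.dim - 1 - d, by lia⟩ : Fin n) : Dual K (Fin n → K))) hX
  simp only [map_sum, LinearMap.lTensor_tmul, slice_tmul, LinearMap.proj_apply,
    topCoefficients_gen_pow hpb, map_zero] at hslice
  rw [Finset.sum_eq_single d (fun e _ hed => by rw [if_neg (by lia), zero_smul])
    fun hd' => absurd (Finset.mem_range.2 hd) hd', if_pos (by lia), one_smul] at hslice
  rw [hslice, TensorProduct.zero_tmul]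

theorem wedgeRight_momentCurve_sum_eq_zero {b : Basis (Fin n) K V} {q : ℕ} {y : ℕ → ⋀[K]^q V}
    (h : koszul K b (fun j : Fin n => pb.gen ^ (j : ℕ)) q
      (∑ d ∈ Finset.range (pb.dim - n), y d ⊗ₜ[K] (pb.gen ^ d)) = 0) (t : K) :
    wedgeRight q (momentCurve b t) (∑ d ∈ Finset.range (pb.dim - n), t ^ d • y d) = 0 := by
  have hslice := congrArg (slice (evalForm pb t)) h
  rw [map_sum, map_sum, map_zero] at hslice
  rw [map_sum, ← hslice]
  refine Finset.sum_congr rfl fun d hd => ?_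
  rw [koszul_tmul, map_sum, map_smul, momentCurve, wedgeRight_sum_smul, Finset.smul_sum]
  refine Finset.sum_congr rfl fun j _ => ?_
  rw [slice_tmul, ← pow_add, evalForm_gen_pow t (by have := Finset.mem_range.1 hd; lia), smul_smul,
    pow_add, mul_comm]

theorem eq_zero_of_koszul_eq_zero_of_topCoefficients_eq_zero [NeZero n] {b : Basis (Fin n) K V}
    (hpb : pb.gen ^ pb.dim = 0) (t : Fin n ↪ K) {q : ℕ} (hq : q + (pb.dim - n) ≤ n)
    {X : ⋀[K]^q V ⊗[K] A} (hkoszul : koszul K b (fun j : Fin n => pb.gen ^ (j : ℕ)) q X = 0)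
    (htop : (topCoefficients n pb).lTensor (⋀[K]^q V) X = 0) : X = 0 := by
  obtain ⟨y, rfl⟩ := exists_eq_sum_tmul_gen_pow_of_topCoefficients_eq_zero hpb htop
  refine Finset.sum_eq_zero fun d hd => ?_
  rw [eq_zero_of_wedgeRight_momentCurve_sum_eq_zero t hq
    (wedgeRight_momentCurve_sum_eq_zero hkoszul) (Finset.mem_range.1 hd), TensorProduct.zero_tmul]

end TopCoefficients

theorem finrank_map_of_forall_mem_eq_zero {R V W : Type*} [Ring R] [AddCommGroup V] [Module R V]
    [AddCommGroup W] [Module R W] {f : V →ₗ[R] W} {S : Submodule R V}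
    (h : ∀ x ∈ S, f x = 0 → x = 0) : finrank R (S.map f) = finrank R S := by
  rw [← LinearMap.range_domRestrict, LinearMap.finrank_range_of_inj]
  exact (injective_iff_map_eq_zero _).2 fun x hx => Subtype.ext (h x x.2 hx)

section Rank

variable {K V A : Type*} [Field K] [AddCommGroup V] [Module K V] [CommRing A] [Algebra K A] {n : ℕ}

/-- The Koszul flattening of the tensor `(i, j, k) ↦ topForm pb (gen ^ (i + j + k))`, as the Koszul
differential restricted to polynomials of degree less than `n` and read off in the top
coefficients. -/
def koszulFlattening (b : Basis (Fin n) K V) (pb : PowerBasis K A) (p : ℕ) :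
    ⋀[K]^p V ⊗[K] (Fin n → K) →ₗ[K] ⋀[K]^(p + 1) V ⊗[K] (Fin n → K) :=
  (topCoefficients n pb).lTensor _ ∘ₗ koszul K b (fun j : Fin n => pb.gen ^ (j : ℕ)) p ∘ₗ
    (truncation n pb).lTensor _

theorem koszulFlattening_tmul_single {b : Basis (Fin n) K V} {pb : PowerBasis K A}
    (hpb : pb.gen ^ pb.dim = 0) (p : ℕ) (ω : ⋀[K]^p V) (i : Fin n) :
    koszulFlattening b pb p (ω ⊗ₜ Pi.single i 1) =
      ∑ j : Fin n, ∑ k : Fin n, (if (i + j + k + 1 : ℕ) = pb.dim then (1 : K) else 0) •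
        (wedgeRight p (b j) ω ⊗ₜ[K] (Pi.single k 1 : Fin n → K)) := by
  rw [koszulFlattening, LinearMap.comp_apply, LinearMap.comp_apply, LinearMap.lTensor_tmul,
    truncation_single, koszul_tmul, map_sum]
  refine Finset.sum_congr rfl fun j _ => ?_
  rw [LinearMap.lTensor_tmul, ← pow_add, ← (Pi.basisFun K (Fin n)).sum_repr
    (topCoefficients n pb _), tmul_sum]
  refine Finset.sum_congr rfl fun k _ => ?_
  rw [tmul_smul, Pi.basisFun_repr, Pi.basisFun_apply, topCoefficients_gen_pow hpb,
    show (k + (j + i) + 1 : ℕ) = i + j + k + 1 by lia]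

theorem range_koszulFlattening [NeZero n] (b : Basis (Fin n) K V) {pb : PowerBasis K A}
    (hpb : pb.gen ^ pb.dim = 0) (t : Fin n ↪ K) {p : ℕ} (hdim : pb.dim ≤ n + p) :
    LinearMap.range (koszulFlattening b pb p) =
      (LinearMap.range (koszul K b (fun j : Fin n => pb.gen ^ (j : ℕ)) p)).map
        ((topCoefficients n pb).lTensor _) := by
  set D := koszul K b (fun j : Fin n => pb.gen ^ (j : ℕ)) p
  have hD : (LinearMap.range ((truncation n pb).lTensor _)).map D = LinearMap.range D := by
    rw [LinearMap.range_eq_map D, ← ker_koszul_sup_range_lTensor_truncation b pb hpb t hdim,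
      Submodule.map_sup, LinearMap.le_ker_iff_map.1 le_rfl, bot_sup_eq]
  rw [koszulFlattening, LinearMap.range_comp, LinearMap.range_comp, hD]

theorem finrank_range_koszulFlattening [NeZero n] (b : Basis (Fin n) K V) {pb : PowerBasis K A}
    (hpb : pb.gen ^ pb.dim = 0) (t : Fin n ↪ K) {p : ℕ} (hp : p < n) (hlow : pb.dim ≤ n + p)
    (hhigh : pb.dim + p < 2 * n) :
    finrank K (LinearMap.range (koszulFlattening b pb p)) = (n - 1).choose p * pb.dim := by
  have := pb.finite
  have hd : ∑ j : Fin n, b.coord 0 (b j) • pb.gen ^ (j : ℕ) = 1 := by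
    simp [Finsupp.single_apply]
  have hn : finrank K V = n - 1 + 1 := by
    rw [finrank_eq_card_basis b, Fintype.card_fin]
    lia
  rw [range_koszulFlattening b hpb t hlow,
    finrank_map_of_forall_mem_eq_zero (V := ⋀[K]^(p + 1) V ⊗[K] A)
      (W := ⋀[K]^(p + 1) V ⊗[K] (Fin n → K)),
    finrank_range_koszul hd hn, pb.finrank]
  rintro _ ⟨z, rfl⟩ hz
  exact eq_zero_of_koszul_eq_zero_of_topCoefficients_eq_zero hpb t (by lia)
    (LinearMap.congr_fun (koszul_comp_koszul ..) z) hz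

end Rank

theorem linearMap_ext_ιMulti_tmul {K V V' W : Type*} [CommRing K] [AddCommGroup V] [Module K V]
    [AddCommGroup V'] [Module K V'] [AddCommGroup W] [Module K W] {I I' : Type*} [Finite I]
    (b : Basis I K V) (b' : Basis I' K V') {q : ℕ} {f g : ⋀[K]^q V ⊗[K] V' →ₗ[K] W}
    (h : ∀ (s : Fin q → I) (i : I'),
      f (exteriorPower.ιMulti K q (fun l => b (s l)) ⊗ₜ b' i) =
        g (exteriorPower.ιMulti K q (fun l => b (s l)) ⊗ₜ b' i)) : f = g :=
  TensorProduct.ext <| exteriorPower.linearMap_ext <| b.ext_alternating fun s _ =>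
    b'.ext fun i => h s i

end KoszulFlattening

open TensorProduct KoszulFlattening in
theorem stmt_15_general {K : Type*} [Field K] {n p r : ℕ} (t : Fin n ↪ K) (hp : p < n)
    (hlow : r ≤ n + p) (hhigh : r + p < 2 * n) {H : (Fin 3 → Fin n) → K}
    (hH : ∀ i, H i = if ∑ j, (i j : ℕ) + 1 = r then 1 else 0)
    {φ : ⋀[K]^p (Fin n → K) ⊗[K] (Fin n → K) →ₗ[K] ⋀[K]^(p + 1) (Fin n → K) ⊗[K] (Fin n → K)}
    (hφ : ∀ (js : Fin p → Fin n) (i : Fin n),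
      φ (exteriorPower.ιMulti K p (fun l => Pi.single (js l) 1) ⊗ₜ Pi.single i 1) =
        ∑ j, ∑ k, H ![i, j, k] • (exteriorPower.ιMulti K (p + 1)
          (Fin.snoc (fun l => Pi.single (js l) 1) (Pi.single j 1)) ⊗ₜ[K] Pi.single k 1)) :
    Module.finrank K (LinearMap.range φ) = (n - 1).choose p * r := by
  have : NeZero n := ⟨by lia⟩
  let b := Pi.basisFun K (Fin n)
  let pb := AdjoinRoot.powerBasis' (Polynomial.monic_X_pow (R := K) r)
  have hdim : pb.dim = r := Polynomial.natDegree_X_pow r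
  have hgen : pb.gen ^ pb.dim = 0 := by
    rw [hdim, AdjoinRoot.powerBasis'_gen, ← AdjoinRoot.mk_X, ← map_pow, AdjoinRoot.mk_self]
  have hφ_eq : φ = koszulFlattening b pb p := by
    refine linearMap_ext_ιMulti_tmul (W := ⋀[K]^(p + 1) (Fin n → K) ⊗[K] (Fin n → K)) b b
      fun s i => ?_
    simp only [b, Pi.basisFun_apply, hφ, koszulFlattening_tmul_single hgen, hH, hdim,
      wedgeRight_ιMulti, Fin.sum_univ_three, Matrix.cons_val]
  rw [hφ_eq, finrank_range_koszulFlattening b hgen t hp (by lia) (by lia), hdim]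

open TensorProduct in
/-- The Koszul flattening `φ` of the special Hankel tensor
`H(i,j,k) = 1` iff `i+j+k = r-1` (0-based) has rank `binom(n-1,p)·r`, where
`p = ⌊n/2⌋` and `r = ⌊(3n-1)/2⌋`. -/
theorem stmt_15 (n : ℕ) (hn : 2 ≤ n)
    (H : Tensor 3 n)
    (hH : ∀ i : Fin 3 → Fin n,
      H i = if (∑ j, (i j : ℕ)) = (3 * n - 1) / 2 - 1 then 1 else 0)
    (φ : ((⋀[ℂ]^(n / 2) (Fin n → ℂ)) ⊗[ℂ] (Fin n → ℂ)) →ₗ[ℂ]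
         ((⋀[ℂ]^(n / 2 + 1) (Fin n → ℂ)) ⊗[ℂ] (Fin n → ℂ)))
    (hφ : ∀ (js : Fin (n / 2) → Fin n) (i : Fin n),
      φ ((wedge n (n / 2) fun t => (Pi.single (js t) 1 : Fin n → ℂ)) ⊗ₜ[ℂ]
          (Pi.single i 1 : Fin n → ℂ))
        = ∑ j : Fin n, ∑ k : Fin n, H ![i, j, k] •
            ((wedge n (n / 2 + 1)
                (Fin.snoc (fun t => (Pi.single (js t) 1 : Fin n → ℂ))
                  (Pi.single j 1))) ⊗ₜ[ℂ] (Pi.single k 1 : Fin n → ℂ))) :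
    Module.finrank ℂ (LinearMap.range φ) = (n - 1).choose (n / 2) * ((3 * n - 1) / 2) :=
  stmt_15_general (Fin.valEmbedding.trans Nat.castEmbedding) (by lia) (by lia) (by lia)
    (fun i => by rw [hH]; congr 1; rw [eq_iff_iff]; lia) hφ
end
end

section
/- Let n ≥ 2, m ≥ 1, and let H be a Hankel tensor of order m and dimension n with parameter vector h ∈ ℂ^{d+1}, d = (n−1)m, and let s = ⌊d/2⌋. Then the border Vandermonde rank of H equals the rank of the most square catalecticant Hankel matrix of h: brank_V(H) = rank C_{d−s,s}(h). -/
open scoped BigOperators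
open MvPolynomial

noncomputable section

/-!
Pulling back along `i ↦ i_1 + ⋯ + i_m` turns Hankel tensors into parameter vectors and Vandermonde
tensors into points of the cone over the rational normal curve of degree `d`, so it suffices to show
that the closure of the set of sums of `r` such points is the locus `rank C_{d-s,s}(h) ≤ r`.
The rank is lower semicontinuous and at most `r` on such sums.

Conversely, let `r = rank C_{d-s,s}(h)` and view the kernels of the Hankel matrices of `h` as spaces
of polynomials apolar to `h`. Trading a row for a column strictly enlarges a nonzero kernel, which
contains the old kernel and its multiple by `X`, since no nonzero finite-dimensional space of
polynomials is stable under multiplication by `X`; so the rank does not grow away from the most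
square matrix. Hence `C_{d-r,r}(h)` has rank at most `r` and a nonzero kernel: some `f ≠ 0` of
degree at most `r` is apolar to `h`. If `f` has `r` distinct roots, Lagrange
interpolation at the roots writes `h` as a combination of `r` Vandermonde vectors. In general, move
`f` slightly to degree exactly `r`, and then to distinct roots: the linear system saying that `f` is
apolar to `h` has full row rank, so `h` can be moved along continuously.
-/

namespace HankelTensor

open Polynomial (degreeLT mem_degreeLT)
open scoped Polynomial

section Catalecticant

variable {K : Type*} [Field K]

/-- The catalecticant map of a functional `L` on polynomials, `f ↦ (L (X ^ i * f))_{i < m}`. -/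
def momentMap (L : K[X] →ₗ[K] K) (m : ℕ) : K[X] →ₗ[K] (Fin m → K) :=
  LinearMap.pi fun i => L ∘ₗ LinearMap.mulLeft K (Polynomial.X ^ (i : ℕ))

lemma mem_ker_momentMap {L : K[X] →ₗ[K] K} {m : ℕ} {f : K[X]} :
    f ∈ LinearMap.ker (momentMap L m) ↔ ∀ i < m, L (Polynomial.X ^ i * f) = 0 := by
  simp [momentMap, funext_iff, Fin.forall_iff]

/-- The `m × n` Hankel matrix of the moments `L (X ^ k)` of a functional `L`. -/
def hankelMatrix (L : K[X] →ₗ[K] K) (m n : ℕ) : Matrix (Fin m) (Fin n) K :=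
  Matrix.of fun i j => L (Polynomial.X ^ (i + j : ℕ))

lemma transpose_hankelMatrix (L : K[X] →ₗ[K] K) (m n : ℕ) :
    (hankelMatrix L m n).transpose = hankelMatrix L n m := by
  ext i j
  simp [hankelMatrix, add_comm]

lemma rank_hankelMatrix (L : K[X] →ₗ[K] K) (m n : ℕ) :
    (hankelMatrix L m n).rank = Module.finrank K ((degreeLT K n).map (momentMap L m)) := by
  classical
  have hcols : Set.range (hankelMatrix L m n).col =
      momentMap L m '' ↑((Finset.range n).image fun j => (Polynomial.X : K[X]) ^ j) := by
    ext v
    simp [Fin.exists_iff, momentMap, hankelMatrix, Matrix.col_def, funext_iff, pow_add]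
  rw [Matrix.rank_eq_finrank_span_cols, Polynomial.degreeLT_eq_span_X_pow, Submodule.map_span,
    hcols]

/-- The polynomials of degree less than `n` apolar to `L`: those in the kernel of the `m × n`
Hankel matrix of `L`, a polynomial being identified with its coefficient vector. -/
def apolar (L : K[X] →ₗ[K] K) (m n : ℕ) : Submodule K K[X] :=
  degreeLT K n ⊓ LinearMap.ker (momentMap L m)

instance (L : K[X] →ₗ[K] K) (m n : ℕ) : FiniteDimensional K (apolar L m n) :=
  Submodule.finiteDimensional_inf_left _ _

lemma rank_hankelMatrix_add_finrank_apolar (L : K[X] →ₗ[K] K) (m n : ℕ) :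
    (hankelMatrix L m n).rank + Module.finrank K (apolar L m n) = n := by
  have hker : Module.finrank K (LinearMap.ker ((momentMap L m).domRestrict (degreeLT K n))) =
      Module.finrank K (apolar L m n) := by
    rw [LinearMap.ker_domRestrict, apolar, ← Submodule.map_comap_subtype]
    exact (LinearEquiv.finrank_eq (Submodule.equivMapOfInjective _
      (Submodule.injective_subtype _) _))
  rw [rank_hankelMatrix, ← LinearMap.range_domRestrict, ← hker,
    LinearMap.finrank_range_add_finrank_ker, (Polynomial.degreeLTEquiv K n).finrank_eq,
    Module.finrank_fin_fun]

lemma eq_bot_of_X_mul_mem {N : Submodule K K[X]} {n : ℕ} (hN : N ≤ degreeLT K n)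
    (hX : ∀ f ∈ N, Polynomial.X * f ∈ N) : N = ⊥ := by
  refine (Submodule.eq_bot_iff N).2 fun f hf => by_contra fun hf0 => ?_
  have hpow : ∀ k : ℕ, Polynomial.X ^ k * f ∈ N := fun k => by
    induction k with
    | zero => simpa using hf
    | succ k ih => simpa only [pow_succ', mul_assoc] using hX _ ih
  have hdeg := mem_degreeLT.1 (hN (hpow n))
  rw [Polynomial.degree_mul, Polynomial.degree_X_pow, Polynomial.degree_eq_natDegree hf0,
    ← Nat.cast_add, Nat.cast_lt] at hdeg
  omega

lemma X_mul_mem_apolar {L : K[X] →ₗ[K] K} {m n : ℕ} {f : K[X]} (hf : f ∈ apolar L (m + 1) n) :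
    Polynomial.X * f ∈ apolar L m (n + 1) := by
  obtain ⟨hdeg, hker⟩ := hf
  refine Submodule.mem_inf.2 ⟨?_, mem_ker_momentMap.2 fun i hi => ?_⟩
  · rw [mem_degreeLT, mul_comm, Polynomial.degree_mul_X, Nat.cast_add_one]
    exact WithBot.add_lt_add_right (by simp) (mem_degreeLT.1 hdeg)
  · rw [← mul_assoc, ← pow_succ]
    exact mem_ker_momentMap.1 hker _ (by omega)

lemma apolar_lt_apolar {L : K[X] →ₗ[K] K} {m n : ℕ} (h : apolar L (m + 1) n ≠ ⊥) :
    apolar L (m + 1) n < apolar L m (n + 1) := by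
  have hle : apolar L (m + 1) n ≤ apolar L m (n + 1) := fun f hf =>
    ⟨Polynomial.degreeLT_mono n.le_succ hf.1,
      mem_ker_momentMap.2 fun i hi => mem_ker_momentMap.1 hf.2 i (by omega)⟩
  refine hle.lt_of_ne fun heq => h ?_
  exact eq_bot_of_X_mul_mem inf_le_left fun f hf => heq ▸ X_mul_mem_apolar hf

lemma rank_hankelMatrix_succ_le {L : K[X] →ₗ[K] K} {m n : ℕ}
    (h : (hankelMatrix L (m + 1) n).rank < n) :
    (hankelMatrix L m (n + 1)).rank ≤ (hankelMatrix L (m + 1) n).rank := by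
  have hsum := rank_hankelMatrix_add_finrank_apolar L (m + 1) n
  have hsum' := rank_hankelMatrix_add_finrank_apolar L m (n + 1)
  have hne : apolar L (m + 1) n ≠ ⊥ := by
    rw [← Submodule.one_le_finrank_iff]
    omega
  have := Submodule.finrank_lt_finrank_of_lt (apolar_lt_apolar hne)
  omega

lemma rank_hankelMatrix_add_le {L : K[X] →ₗ[K] K} {m n : ℕ} (j : ℕ)
    (h : (hankelMatrix L (m + j) n).rank < n) :
    (hankelMatrix L m (n + j)).rank ≤ (hankelMatrix L (m + j) n).rank := by
  induction j generalizing m with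
  | zero => exact le_rfl
  | succ j ih =>
    rw [show m + (j + 1) = m + 1 + j by omega] at h ⊢
    have hle := ih h
    exact (rank_hankelMatrix_succ_le (n := n + j) (by omega)).trans hle

lemma exists_mem_apolar_rank {L : K[X] →ₗ[K] K} {m n : ℕ} (hnm : n ≤ m) (hmn : m ≤ n + 1) :
    ∃ f ∈ apolar L (m + n - 1 - (hankelMatrix L m n).rank) ((hankelMatrix L m n).rank + 1),
      f ≠ 0 := by
  have hwidth := (hankelMatrix L m n).rank_le_width
  generalize hr : (hankelMatrix L m n).rank = r at hwidth ⊢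
  suffices hrank : (hankelMatrix L (m + n - 1 - r) (r + 1)).rank ≤ r by
    have hsum := rank_hankelMatrix_add_finrank_apolar L (m + n - 1 - r) (r + 1)
    exact Submodule.exists_mem_ne_zero_of_ne_bot (Submodule.one_le_finrank_iff.1 (by omega))
  rcases hwidth.lt_or_eq with hlt | rfl
  · obtain ⟨j, rfl⟩ := Nat.exists_eq_add_of_le (show r + 1 ≤ m by omega)
    rw [← transpose_hankelMatrix, Matrix.rank_transpose,
      show r + 1 + j + n - 1 - r = n + j by omega]
    exact (rank_hankelMatrix_add_le j (hr.trans_lt hlt)).trans hr.le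
  · exact (Matrix.rank_le_height _).trans (by omega)

end Catalecticant

section Interpolation

variable {K : Type*} [Field K]

lemma apply_mul_eq_zero_of_mem_ker_momentMap {L : K[X] →ₗ[K] K} {m : ℕ} {f q : K[X]}
    (hf : f ∈ LinearMap.ker (momentMap L m)) (hq : q ∈ degreeLT K m) : L (q * f) = 0 := by
  classical
  suffices hle : degreeLT K m ≤ LinearMap.ker (L ∘ₗ LinearMap.mulRight K f) from hle hq
  rw [Polynomial.degreeLT_eq_span_X_pow, Submodule.span_le]
  intro p hp
  obtain ⟨i, hi, rfl⟩ := Finset.mem_image.1 hp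
  exact mem_ker_momentMap.1 hf i (Finset.mem_range.1 hi)

lemma apply_eq_sum_eval_mul_basis {ι : Type*} [Fintype ι] [DecidableEq ι] {z : ι → K}
    (hz : Function.Injective z) {L : K[X] →ₗ[K] K} {m : ℕ}
    (hL : Lagrange.nodal Finset.univ z ∈ LinearMap.ker (momentMap L m)) {f : K[X]}
    (hf : f ∈ degreeLT K (m + Fintype.card ι)) :
    L f = ∑ i, f.eval (z i) * L (Lagrange.basis Finset.univ z i) := by
  set g := Lagrange.nodal Finset.univ z with hg
  have hmonic : g.Monic := Lagrange.nodal_monic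
  have hquot : f /ₘ g ∈ degreeLT K m := by
    by_cases hfg : f /ₘ g = 0
    · exact hfg ▸ zero_mem _
    have hle : g.degree ≤ f.degree :=
      not_lt.1 fun hlt => hfg ((Polynomial.divByMonic_eq_zero_iff hmonic).2 hlt)
    have hdeg := Polynomial.degree_add_divByMonic hmonic hle
    rw [mem_degreeLT] at hf ⊢
    rw [← hdeg, hg, Lagrange.degree_nodal, Polynomial.degree_eq_natDegree hfg] at hf
    rw [Polynomial.degree_eq_natDegree hfg]
    norm_cast at hf ⊢
    rw [Finset.card_univ] at hf
    omega
  have hmod : f %ₘ g = Lagrange.interpolate Finset.univ z fun i => f.eval (z i) := by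
    refine Lagrange.eq_interpolate_of_eval_eq _ hz.injOn ?_ fun i hi => ?_
    · rw [← Lagrange.degree_nodal (v := z)]
      exact Polynomial.degree_modByMonic_lt _ hmonic
    · exact Polynomial.eval₂_modByMonic_eq_self_of_root (Lagrange.eval_nodal_at_node hi)
  calc L f = L (f %ₘ g) + L (f /ₘ g * g) := by
        rw [← map_add, mul_comm, Polynomial.modByMonic_add_div]
    _ = ∑ i, f.eval (z i) * L (Lagrange.basis Finset.univ z i) := by
        simp [apply_mul_eq_zero_of_mem_ker_momentMap hL hquot, hmod, Lagrange.interpolate_apply,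
          Polynomial.C_mul']

end Interpolation

section Moments

variable {K : Type*} [Field K] {n : ℕ}

/-- The functional on polynomials with moments `h 0, …, h (n - 1), 0, 0, …`. -/
def momentFunctional (h : Fin n → K) : K[X] →ₗ[K] K :=
  ∑ k, h k • Polynomial.lcoeff K k

lemma momentFunctional_apply (h : Fin n → K) (f : K[X]) :
    momentFunctional h f = ∑ k : Fin n, f.coeff k * h k := by
  simp [momentFunctional, mul_comm]

lemma momentFunctional_X_pow (h : Fin n → K) (k : ℕ) :
    momentFunctional h (Polynomial.X ^ k) = if hk : k < n then h ⟨k, hk⟩ else 0 := by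
  simp only [momentFunctional_apply, Polynomial.coeff_X_pow, ite_mul, one_mul, zero_mul]
  split_ifs with hk
  · simpa [Fin.ext_iff] using Finset.sum_ite_eq' Finset.univ (⟨k, hk⟩ : Fin n) h
  · exact Finset.sum_eq_zero fun i _ => if_neg (by omega)

/-- The `m × n` matrix whose rows are the coefficient vectors of `f, X * f, …, X ^ (m - 1) * f`. -/
def shiftMatrix (m n : ℕ) (f : K[X]) : Matrix (Fin m) (Fin n) K :=
  Matrix.of fun i k => (Polynomial.X ^ (i : ℕ) * f).coeff k

lemma momentMap_momentFunctional (m : ℕ) (h : Fin n → K) (f : K[X]) :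
    momentMap (momentFunctional h) m f = (shiftMatrix m n f).mulVec h := by
  ext i
  exact momentFunctional_apply h _

lemma linearIndependent_X_pow_mul {f : K[X]} (hf : f ≠ 0) (m : ℕ) :
    LinearIndependent K fun i : Fin m => Polynomial.X ^ (i : ℕ) * f := by
  have hX : LinearIndependent K fun i : Fin m => (Polynomial.X : K[X]) ^ (i : ℕ) := by
    simpa [Function.comp_def, Polynomial.monomial_one_right_eq_X_pow] using
      (Polynomial.basisMonomials K).linearIndependent.comp _ (Fin.val_injective (n := m))
  exact hX.map' (LinearMap.mulRight K f) (LinearMap.ker_eq_bot.2 (mul_left_injective₀ hf))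

lemma linearIndependent_row_shiftMatrix {f : K[X]} (hf : f ≠ 0) {m : ℕ}
    (hmn : m + f.natDegree ≤ n) : LinearIndependent K (shiftMatrix m n f).row := by
  refine LinearIndependent.of_comp
    ((degreeLT K n).subtype ∘ₗ (Polynomial.degreeLTEquiv K n).symm.toLinearMap) ?_
  convert linearIndependent_X_pow_mul hf m with i
  have hdeg : Polynomial.X ^ (i : ℕ) * f ∈ degreeLT K n := by
    rw [mem_degreeLT, Polynomial.degree_mul, Polynomial.degree_X_pow,
      Polynomial.degree_eq_natDegree hf]
    norm_cast
    omega
  exact congrArg Subtype.val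
    ((Polynomial.degreeLTEquiv K n).symm_apply_apply ⟨Polynomial.X ^ (i : ℕ) * f, hdeg⟩)

lemma exists_mul_eq_one_of_linearIndependent_row {m n : Type*} [Finite m] [DecidableEq m]
    [Fintype n] {A : Matrix m n K} (hA : LinearIndependent K A.row) :
    ∃ B : Matrix n m K, A * B = 1 := by
  have := Fintype.ofFinite m
  rw [← Matrix.mulVec_surjective_iff_exists_right_inverse]
  suffices hrange : LinearMap.range A.mulVecLin = ⊤ from LinearMap.range_eq_top.1 hrange
  refine Submodule.eq_top_of_finrank_eq ?_
  rw [← Matrix.rank, hA.rank_matrix, Module.finrank_fintype_fun_eq_card]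

end Moments

section Perturbation

variable {Y : Type*} [TopologicalSpace Y]

/-- The vectors are `det (A y * B) • v - B * adjugate (A y * B) * A y * v`: the projection of `v`
onto the kernel of `A y`, with denominators cleared. -/
lemma exists_continuous_mulVec_eq_zero {m n R : Type*} [CommRing R] [TopologicalSpace R]
    [IsTopologicalRing R] [Finite m] [DecidableEq m] [Fintype n] {A : Y → Matrix m n R}
    (hA : Continuous A) {y₀ : Y} {B : Matrix n m R} (hB : A y₀ * B = 1) {v : n → R}
    (hv : (A y₀).mulVec v = 0) :
    ∃ w : Y → n → R, Continuous w ∧ w y₀ = v ∧ ∀ y, (A y).mulVec (w y) = 0 := by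
  have := Fintype.ofFinite m
  have hAB : Continuous fun y => A y * B := hA.matrix_mul continuous_const
  refine ⟨fun y => (A y * B).det • v -
    B.mulVec ((A y * B).adjugate.mulVec ((A y).mulVec v)), ?_, ?_, fun y => ?_⟩
  · exact (hAB.matrix_det.smul continuous_const).sub (continuous_const.matrix_mulVec
      (hAB.matrix_adjugate.matrix_mulVec (hA.matrix_mulVec continuous_const)))
  · simp [hB, hv]
  · simp [Matrix.mulVec_sub, Matrix.mulVec_smul, Matrix.mulVec_mulVec, ← Matrix.mul_assoc,
      Matrix.mul_adjugate, Matrix.smul_mulVec]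

lemma exists_continuous_mem_ker_momentMap {K : Type*} [Field K] [TopologicalSpace K]
    [IsTopologicalRing K] {G : Y → K[X]}
    (hG : ∀ k, Continuous fun y => (G y).coeff k) {y₀ : Y} (hG₀ : G y₀ ≠ 0) {m n : ℕ}
    (hmn : m + (G y₀).natDegree ≤ n) {h : Fin n → K}
    (hh : G y₀ ∈ LinearMap.ker (momentMap (momentFunctional h) m)) :
    ∃ w : Y → Fin n → K, Continuous w ∧ w y₀ = h ∧
      ∀ y, G y ∈ LinearMap.ker (momentMap (momentFunctional (w y)) m) := by
  simp only [LinearMap.mem_ker, momentMap_momentFunctional] at hh ⊢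
  obtain ⟨B, hB⟩ :=
    exists_mul_eq_one_of_linearIndependent_row (linearIndependent_row_shiftMatrix hG₀ hmn)
  have hshift : Continuous fun y => shiftMatrix m n (G y) := by
    refine continuous_matrix fun i k => ?_
    simp only [shiftMatrix, Matrix.of_apply, Polynomial.coeff_X_pow_mul']
    split_ifs
    exacts [hG _, continuous_const]
  exact exists_continuous_mulVec_eq_zero hshift hB hh

end Perturbation

section Nodal

lemma dense_setOf_injective {ι 𝕜 : Type*} [Finite ι] [NontriviallyNormedField 𝕜] :
    Dense {z : ι → 𝕜 | Function.Injective z} := by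
  classical
  let U : ι × ι → Set (ι → 𝕜) := fun p => {z | z p.1 ≠ z p.2}
  have hopen : ∀ p, IsOpen (U p) := fun p =>
    isOpen_ne_fun (continuous_apply p.1) (continuous_apply p.2)
  have hdense : ∀ p : ι × ι, p.1 ≠ p.2 → Dense (U p) := fun p hp => by
    let N : Submodule 𝕜 (ι → 𝕜) :=
      LinearMap.ker ((LinearMap.proj p.1 : (ι → 𝕜) →ₗ[𝕜] 𝕜) - LinearMap.proj p.2)
    have hN : U p = (N : Set (ι → 𝕜))ᶜ := by
      ext z
      simp [U, N, sub_eq_zero]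
    rw [hN, ← interior_eq_empty_iff_dense_compl, ← Set.not_nonempty_iff_eq_empty]
    intro hne
    have hsingle : Pi.single p.1 1 ∈ N := N.eq_top_of_nonempty_interior' hne ▸ Submodule.mem_top
    simp [N, hp.symm] at hsingle
  have hinter := (Set.toFinite (U '' {p | p.1 ≠ p.2})).dense_sInter
    (Set.forall_mem_image.2 fun p _ => hopen p) (Set.forall_mem_image.2 hdense)
  refine hinter.mono fun z hz i j hij => by_contra fun hne => ?_
  exact Set.mem_sInter.1 hz _ ⟨(i, j), hne, rfl⟩ hij

lemma continuous_coeff_nodal {ι R : Type*} [CommRing R] [TopologicalSpace R] [IsTopologicalRing R]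
    (s : Finset ι) (k : ℕ) : Continuous fun z : ι → R => (Lagrange.nodal s z).coeff k := by
  classical
  induction s using Finset.induction_on generalizing k with
  | empty => simpa using continuous_const
  | insert i s hi ih =>
    simp only [Lagrange.nodal_insert_eq_nodal hi, sub_mul, Polynomial.coeff_sub,
      Polynomial.coeff_C_mul]
    refine Continuous.sub ?_ ((continuous_apply i).mul (ih k))
    cases k with
    | zero => simpa only [Polynomial.coeff_X_mul_zero] using continuous_const
    | succ k => simpa only [Polynomial.coeff_X_mul] using ih k

lemma exists_map_univ_eq {α : Type*} {s : Multiset α} {n : ℕ} (hs : s.card = n) :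
    ∃ z : Fin n → α, Finset.univ.val.map z = s := by
  subst hs
  induction s using Quotient.inductionOn with
  | h l => exact ⟨l.get, (Fin.univ_val_map l.get).trans (congrArg _ (List.ofFn_get l))⟩

lemma exists_eq_leadingCoeff_smul_nodal {K : Type*} [Field K] [IsAlgClosed K] (f : K[X]) :
    ∃ z : Fin f.natDegree → K, f = f.leadingCoeff • Lagrange.nodal Finset.univ z := by
  have hsplits := IsAlgClosed.splits f
  obtain ⟨z, hz⟩ := exists_map_univ_eq hsplits.natDegree_eq_card_roots.symm
  refine ⟨z, ?_⟩
  conv_lhs => rw [hsplits.eq_prod_roots, ← hz, Multiset.map_map, Polynomial.C_mul']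
  rfl

end Nodal

section VandermondeSums

/-- The parameter vectors in `ℂ ^ (d + 1)` that are sums of `r` Vandermonde vectors: the affine cone
over the union of the `r`-secant spaces of the rational normal curve of degree `d`. -/
def vandermondeSums (d r : ℕ) : Set (Fin (d + 1) → ℂ) :=
  {h | ∃ ab : Fin r → ℂ × ℂ, h = ∑ k, vand (d + 1) (ab k).1 (ab k).2}

lemma vand_mul_mul (d : ℕ) (t a b : ℂ) :
    vand (d + 1) (t * a) (t * b) = t ^ d • vand (d + 1) a b := by
  ext i
  have hpow : t ^ d = t ^ (d + 1 - 1 - i : ℕ) * t ^ (i : ℕ) := by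
    rw [← pow_add]
    congr 1
    omega
  simp only [vand, mul_pow, Pi.smul_apply, smul_eq_mul, hpow]
  ring

lemma sum_smul_vand_mem_vandermondeSums {d r : ℕ} (hd : d ≠ 0) (c z : Fin r → ℂ) :
    ∑ k, c k • vand (d + 1) 1 (z k) ∈ vandermondeSums d r := by
  choose t ht using fun k => IsAlgClosed.exists_pow_nat_eq (c k) (Nat.pos_of_ne_zero hd)
  exact ⟨fun k => (t k * 1, t k * z k), by simp only [vand_mul_mul, ht]⟩

lemma vandermondeSums_mono {d : ℕ} (hd : d ≠ 0) : Monotone (vandermondeSums d) := by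
  have hzero : vand (d + 1) 0 0 = 0 := by simpa [hd] using vand_mul_mul d 0 0 0
  refine monotone_nat_of_le_succ fun r => ?_
  rintro _ ⟨ab, rfl⟩
  exact ⟨Fin.snoc ab (0, 0), by simp [Fin.sum_univ_castSucc, hzero]⟩

variable {d m r : ℕ} {h : Fin (d + 1) → ℂ}

lemma mem_vandermondeSums_of_injective (hd : d ≠ 0) (hmr : d < m + r) {z : Fin r → ℂ}
    (hz : Function.Injective z)
    (hh : Lagrange.nodal Finset.univ z ∈ LinearMap.ker (momentMap (momentFunctional h) m)) :
    h ∈ vandermondeSums d r := by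
  convert sum_smul_vand_mem_vandermondeSums hd
    (fun i => momentFunctional h (Lagrange.basis Finset.univ z i)) z
  ext k
  have hdeg : (Polynomial.X : ℂ[X]) ^ (k : ℕ) ∈ degreeLT ℂ (m + Fintype.card (Fin r)) := by
    rw [mem_degreeLT, Polynomial.degree_X_pow, Fintype.card_fin]
    norm_cast
    omega
  simpa [momentFunctional_X_pow, vand, mul_comm, k.is_le] using
    apply_eq_sum_eval_mul_basis hz hh hdeg

lemma mem_closure_vandermondeSums_of_nodal (hd : d ≠ 0) (hmr : m + r = d + 1) {z : Fin r → ℂ}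
    (hh : Lagrange.nodal Finset.univ z ∈ LinearMap.ker (momentMap (momentFunctional h) m)) :
    h ∈ closure (vandermondeSums d r) := by
  obtain ⟨w, hw, rfl, hker⟩ := exists_continuous_mem_ker_momentMap
    (continuous_coeff_nodal (R := ℂ) Finset.univ) Lagrange.nodal_ne_zero
    (by simp [Lagrange.natDegree_nodal, hmr]) hh
  exact map_mem_closure hw (dense_setOf_injective z) fun y hy =>
    mem_vandermondeSums_of_injective hd (by omega) hy (hker y)

lemma mem_closure_vandermondeSums_of_natDegree_eq (hd : d ≠ 0) (hmr : m + r = d + 1) {f : ℂ[X]}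
    (hf : f ≠ 0) (hfr : f.natDegree = r)
    (hh : f ∈ LinearMap.ker (momentMap (momentFunctional h) m)) :
    h ∈ closure (vandermondeSums d r) := by
  subst hfr
  obtain ⟨z, hz⟩ := exists_eq_leadingCoeff_smul_nodal f
  rw [hz, Submodule.smul_mem_iff _ (Polynomial.leadingCoeff_ne_zero.2 hf)] at hh
  exact mem_closure_vandermondeSums_of_nodal hd hmr hh

lemma mem_closure_vandermondeSums_of_mem_apolar (hd : d ≠ 0) (hmr : m + r = d + 1) {f : ℂ[X]}
    (hf : f ≠ 0) (hh : f ∈ apolar (momentFunctional h) m (r + 1)) :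
    h ∈ closure (vandermondeSums d r) := by
  obtain ⟨hdeg, hker⟩ := hh
  have hfr : f.natDegree ≤ r := Nat.lt_succ_iff.1
    ((Polynomial.natDegree_lt_iff_degree_lt hf).2 (mem_degreeLT.1 hdeg))
  obtain ⟨w, hw, hw₀, hker⟩ := exists_continuous_mem_ker_momentMap (y₀ := (0 : ℂ))
    (G := fun t => f + Polynomial.monomial r t) (m := m) (h := h) (fun k => by
      simp only [Polynomial.coeff_add, Polynomial.coeff_monomial]
      split_ifs <;> fun_prop)
    (by simpa using hf) (by simp; omega) (by simpa using hker)
  rw [← hw₀, ← closure_closure]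
  refine map_mem_closure hw (dense_compl_singleton (-f.coeff r) 0) fun t ht => ?_
  have hcoeff : (f + Polynomial.monomial r t).coeff r ≠ 0 := by
    simpa [add_eq_zero_iff_eq_neg'] using ht
  exact mem_closure_vandermondeSums_of_natDegree_eq hd hmr
    (fun h0 => hcoeff (by rw [h0, Polynomial.coeff_zero]))
    (Polynomial.natDegree_eq_of_le_of_coeff_ne_zero
      (Polynomial.natDegree_add_le_of_degree_le hfr (Polynomial.natDegree_monomial_le _)) hcoeff)
    (hker t)

end VandermondeSums

section Rank

lemma isClosed_setOf_rank_le {m n 𝕜 : Type*} [Finite m] [Fintype n]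
    [NontriviallyNormedField 𝕜] [CompleteSpace 𝕜] (r : ℕ) :
    IsClosed {A : Matrix m n 𝕜 | A.rank ≤ r} := by
  classical
  have := Fintype.ofFinite m
  let toCLM : Matrix m n 𝕜 →ₗ[𝕜] ((n → 𝕜) →L[𝕜] (m → 𝕜)) :=
    LinearMap.toContinuousLinearMap.toLinearMap ∘ₗ Matrix.toLin'.toLinearMap
  have hopen := (isOpen_setOfPred_nat_le_rank (𝕜 := 𝕜) (E := n → 𝕜) (F := m → 𝕜) (r + 1)).preimage
    toCLM.continuous_of_finiteDimensional
  rw [← isOpen_compl_iff]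
  convert hopen using 1
  ext A
  have hrank : (toCLM A : (n → 𝕜) →ₗ[𝕜] (m → 𝕜)).rank = (A.rank : Cardinal) :=
    (Module.finrank_eq_rank 𝕜 (LinearMap.range A.mulVecLin)).symm
  simp only [Set.mem_compl_iff, Set.mem_ofPred_eq, not_le, Set.mem_preimage, hrank, Nat.cast_le]
  exact Nat.lt_iff_add_one_le

variable {d r s : ℕ}

lemma hMat_eq_hankelMatrix (d s : ℕ) (h : Fin (d + 1) → ℂ) :
    hMat d s h = hankelMatrix (momentFunctional h) (d - s + 1) (s + 1) := by
  ext i j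
  simp [hMat, hankelMatrix, momentFunctional_X_pow]

lemma continuous_hMat (d s : ℕ) : Continuous (hMat d s) := by
  refine continuous_matrix fun i j => ?_
  simp only [hMat, Matrix.of_apply]
  split_ifs <;> fun_prop

lemma hMat_vand (hs : s ≤ d) (a b : ℂ) :
    hMat d s (vand (d + 1) a b) =
      Matrix.vecMulVec (vand (d - s + 1) a b) (vand (s + 1) a b) := by
  ext i j
  have hpow : a ^ (d + 1 - 1 - (i + j) : ℕ) =
      a ^ (d - s + 1 - 1 - i : ℕ) * a ^ (s + 1 - 1 - j : ℕ) := by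
    rw [← pow_add]
    congr 1
    omega
  simp only [hMat, vand, Matrix.of_apply, Matrix.vecMulVec_apply,
    dif_pos (show (i + j : ℕ) < d + 1 by omega), hpow, pow_add b]
  ring

lemma rank_hMat_le_of_mem_vandermondeSums (hs : s ≤ d) {h : Fin (d + 1) → ℂ}
    (hh : h ∈ vandermondeSums d r) : (hMat d s h).rank ≤ r := by
  obtain ⟨ab, rfl⟩ := hh
  have hfactor : hMat d s (∑ k, vand (d + 1) (ab k).1 (ab k).2) =
      (Matrix.of fun k => vand (d - s + 1) (ab k).1 (ab k).2).transpose *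
        Matrix.of fun k => vand (s + 1) (ab k).1 (ab k).2 := by
    ext i j
    have hij : (i + j : ℕ) < d + 1 := by omega
    simp only [hMat, Matrix.of_apply, dif_pos hij, Finset.sum_apply, Matrix.mul_apply,
      Matrix.transpose_apply]
    refine Finset.sum_congr rfl fun k _ => ?_
    simpa [hMat, Nat.lt_succ_iff.1 hij, Matrix.vecMulVec_apply] using
      congrFun₂ (hMat_vand hs (ab k).1 (ab k).2) i j
  rw [hfactor]
  exact (Matrix.rank_mul_le_right _ _).trans (Matrix.rank_le_height _)

theorem closure_vandermondeSums (hd : d ≠ 0) (r : ℕ) :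
    closure (vandermondeSums d r) = {h | (hMat d (d / 2) h).rank ≤ r} := by
  refine (closure_minimal (fun h => rank_hMat_le_of_mem_vandermondeSums (Nat.div_le_self d 2))
    ((isClosed_setOf_rank_le r).preimage (continuous_hMat d (d / 2)))).antisymm fun h hr => ?_
  have hwidth := (hMat d (d / 2) h).rank_le_width
  refine closure_mono (vandermondeSums_mono hd hr) ?_
  rw [hMat_eq_hankelMatrix] at hwidth ⊢
  obtain ⟨f, hf, hf0⟩ := exists_mem_apolar_rank (L := momentFunctional h)
    (show d / 2 + 1 ≤ d - d / 2 + 1 by omega) (by omega)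
  exact mem_closure_vandermondeSums_of_mem_apolar hd (by omega) hf0 hf

end Rank

section HankelTensors

variable {m n : ℕ}

/-- The position `i_1 + ⋯ + i_m` in the parameter vector of the `i`-th entry of a Hankel tensor. -/
def hankelIndex (i : Fin m → Fin n) : Fin ((n - 1) * m + 1) :=
  ⟨∑ j, (i j : ℕ), by
    have hle : ∑ j, (i j : ℕ) ≤ ∑ _j : Fin m, (n - 1) :=
      Finset.sum_le_sum fun j _ => Nat.le_pred_of_lt (i j).isLt
    simp only [Finset.sum_const, Finset.card_univ, Fintype.card_fin, smul_eq_mul, mul_comm m] at hle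
    omega⟩

lemma exists_sum_eq (hn : 1 ≤ n) (m k : ℕ) (hk : k ≤ (n - 1) * m) :
    ∃ i : Fin m → Fin n, ∑ j, (i j : ℕ) = k := by
  induction m generalizing k with
  | zero => exact ⟨Fin.elim0, by simp at hk ⊢; omega⟩
  | succ m ih =>
    rw [Nat.mul_succ] at hk
    obtain ⟨i, hi⟩ := ih (k - min k (n - 1)) (by omega)
    refine ⟨Fin.cons ⟨min k (n - 1), by omega⟩ i, ?_⟩
    rw [Fin.sum_univ_succ]
    simp only [Fin.cons_zero, Fin.cons_succ, hi]
    omega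

lemma hankelIndex_surjective (hn : 1 ≤ n) :
    Function.Surjective (hankelIndex : (Fin m → Fin n) → Fin ((n - 1) * m + 1)) := fun k =>
  (exists_sum_eq hn m k (Nat.lt_succ_iff.1 k.2)).imp fun _ hi => Fin.ext hi

lemma vand_hankelIndex (a b : ℂ) (i : Fin m → Fin n) :
    vand ((n - 1) * m + 1) a b (hankelIndex i) = ∏ j, vand n a b (i j) := by
  simp only [vand, hankelIndex, Finset.prod_mul_distrib, Finset.prod_pow_eq_pow_sum]
  rw [Finset.sum_tsub_distrib _ fun j _ => show (i j : ℕ) ≤ n - 1 by omega]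
  simp [mul_comm]

lemma vandSet_eq_image (m n r : ℕ) :
    vandSet m n r = LinearMap.funLeft ℂ ℂ hankelIndex '' vandermondeSums ((n - 1) * m) r := by
  have hsum (ab : Fin r → ℂ × ℂ) (i : Fin m → Fin n) :
      ∑ k, ∏ j, vand n (ab k).1 (ab k).2 (i j) = LinearMap.funLeft ℂ ℂ hankelIndex
        (∑ k, vand ((n - 1) * m + 1) (ab k).1 (ab k).2) i := by
    simp [LinearMap.funLeft_apply, vand_hankelIndex]
  ext T
  constructor
  · rintro ⟨ab, hT⟩
    exact ⟨_, ⟨ab, rfl⟩, funext fun i => ((hT i).trans (hsum ab i)).symm⟩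
  · rintro ⟨_, ⟨ab, rfl⟩, rfl⟩
    exact ⟨ab, fun i => (hsum ab i).symm⟩

lemma mem_closure_vandSet_iff (hn : 1 ≤ n) {H : Tensor m n} {h : Fin ((n - 1) * m + 1) → ℂ}
    (hH : IsHankel H h) (r : ℕ) :
    H ∈ closure (vandSet m n r) ↔ h ∈ closure (vandermondeSums ((n - 1) * m) r) := by
  have hinj : Function.Injective (LinearMap.funLeft ℂ ℂ (hankelIndex (m := m) (n := n))) :=
    LinearMap.funLeft_injective_of_surjective ℂ ℂ _ (hankelIndex_surjective hn)
  have hemb := LinearMap.isClosedEmbedding_of_injective (LinearMap.ker_eq_bot.2 hinj)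
  rw [vandSet_eq_image, hemb.closure_image_eq,
    show H = LinearMap.funLeft ℂ ℂ hankelIndex h from funext hH, hinj.mem_set_image]

end HankelTensors

end HankelTensor

/-- For a Hankel tensor `H` with parameter vector `h`,
`brank_V(H) = rank C_{d-s,s}(h)` with `s = ⌊d/2⌋`. -/
theorem stmt_17 (n m : ℕ) (hn : 2 ≤ n) (hm : 1 ≤ m)
    (H : Tensor m n) (h : Fin ((n - 1) * m + 1) → ℂ) (hH : IsHankel H h) :
    bVandRank H = (hMat ((n - 1) * m) ((n - 1) * m / 2) h).rank := by
  have hd : (n - 1) * m ≠ 0 := mul_ne_zero (by omega) (by omega)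
  have hmem (r : ℕ) :
      H ∈ closure (vandSet m n r) ↔ (hMat ((n - 1) * m) ((n - 1) * m / 2) h).rank ≤ r := by
    rw [HankelTensor.mem_closure_vandSet_iff (by omega) hH,
      HankelTensor.closure_vandermondeSums hd, Set.mem_ofPred_eq]
  simp only [bVandRank, hmem]
  exact csInf_Ici
end
end
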